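/- arXiv:2410.16661 — 2 statements merged into one kernel-verified Lean document; each statement's English description precedes it below -/
import Mathlib

section
/- Let n ≥ 1, s ∈ (0,1), α ∈ (0,1), K > 0, let Ω ⊂ ℝⁿ be a bounded open set, and let u : ℝⁿ → ℝ be bounded and Lipschitz, twice continuously differentiable in Ω, with |D²u(x)| ≤ K·dist(x,∂Ω)^{α−1} for all x ∈ Ω. Then there exists a constant C, depending only on n, s, α, K, ‖u‖_{C^{0,1}(ℝⁿ)} and the diameter of Ω, such that for all x ∈ Ω: |(−Δ)ˢu(x)| ≤ C(1 + 𝟙_{s=1/2}|log dist(x,∂Ω)| + 𝟙_{s>1/2} dist(x,∂Ω)^{1−2s}). -/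
/-!
Let `d` be the distance from `x` to the boundary and `ρ = min d 1 / 2`. The second difference
`w y = 2 u(x) - u(x+y) - u(x-y)` is at most `2 K ρ^(α-1) |y|²` for `|y| ≤ ρ` by the Hessian bound,
at most `2 L |y|` by the Lipschitz bound, and at most `4 M` by boundedness. Using these on
`|y| ≤ ρ`, `ρ < |y| ≤ 1` and `1 < |y|` respectively and integrating against `|y|^(-n-2s)` in polar
coordinates gives terms of order `ρ^(α+1-2s)`, `∫ r in ρ..1, r^(-2s)` and `1`; the middle one
produces the logarithm or the power of `d`.
-/

open MeasureTheory Real Set Metric Bornology Filter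
open scoped RealInnerProductSpace ENNReal NNReal Pointwise

noncomputable section

abbrev En (n : ℕ) : Type := EuclideanSpace ℝ (Fin n)

/-- The normalizing constant `c_{n,s}`. -/
def cK (n : ℕ) (s : ℝ) : ℝ :=
  s * (2 : ℝ) ^ (2 * s) * Real.Gamma (((n : ℝ) + 2 * s) / 2) /
    (Real.pi ^ ((n : ℝ) / 2) * Real.Gamma (1 - s))

/-- The fractional Laplacian `(-Δ)ˢ u (x)`. -/
def fracLap (n : ℕ) (s : ℝ) (u : En n → ℝ) (x : En n) : ℝ :=
  (cK n s / 2) * ∫ y : En n, (2 * u x - u (x + y) - u (x - y)) / ‖y‖ ^ ((n : ℝ) + 2 * s)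

/-- `(-Δ)^{s/2} u (x)`, defined via the non-symmetrized integral. -/
def fracHalf (n : ℕ) (s : ℝ) (u : En n → ℝ) (x : En n) : ℝ :=
  cK n (s / 2) * ∫ z : En n, (u x - u (x + z)) / ‖z‖ ^ ((n : ℝ) + s)

/-- The squared Gagliardo-type seminorm `[u]_s²`. -/
def seminormSsq (n : ℕ) (s : ℝ) (u : En n → ℝ) : ℝ :=
  (cK n s / 2) * ∫ p : En n × En n, (u p.1 - u p.2) ^ 2 / ‖p.1 - p.2‖ ^ ((n : ℝ) + 2 * s)

/-- The squared seminorm `[u]₁² = ∫_Ω |∇u|²`. -/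
def seminorm1sq (n : ℕ) (Ω : Set (En n)) (u : En n → ℝ) : ℝ :=
  ∫ x in Ω, ‖gradient u x‖ ^ 2

/-- The Laplacian as the trace of the Hessian. -/
def lap (n : ℕ) (u : En n → ℝ) (x : En n) : ℝ :=
  ∑ i : Fin n, fderiv ℝ (fun y => fderiv ℝ u y (EuclideanSpace.single i 1)) x
    (EuclideanSpace.single i 1)

/-- The Hessian `D²u(x)` as a continuous bilinear-type map; `‖hess n u x‖` is its operator
norm. -/
def hess (n : ℕ) (u : En n → ℝ) (x : En n) : En n →L[ℝ] En n →L[ℝ] ℝ :=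
  fderiv ℝ (fderiv ℝ u) x

/-- A bounded C² domain `Ω ⊆ ℝⁿ`: a bounded open connected set whose boundary is a C²
hypersurface, described by a global C² defining function with nonvanishing gradient
on the boundary. -/
structure C2Domain (n : ℕ) where
  carrier : Set (En n)
  phi : En n → ℝ
  phi_smooth : ContDiff ℝ 2 phi
  carrier_eq : carrier = {x | phi x < 0}
  grad_ne : ∀ x ∈ frontier carrier, gradient phi x ≠ 0
  bounded : IsBounded carrier
  connected : IsConnected carrier

/-- The outward unit normal `ν` on `∂Ω`. -/
def C2Domain.nu {n : ℕ} (D : C2Domain n) (x : En n) : En n :=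
  ‖gradient D.phi x‖⁻¹ • gradient D.phi x

/-- The normal derivative `∂u/∂ν` at a boundary point (the derivative from inside). -/
def normalDeriv {n : ℕ} (D : C2Domain n) (u : En n → ℝ) (x : En n) : ℝ :=
  fderivWithin ℝ u (closure D.carrier) x (D.nu x)

/-- `Ω` is strictly star-shaped with respect to `z₀`. -/
def C2Domain.StrictlyStarShapedAt {n : ℕ} (D : C2Domain n) (z₀ : En n) : Prop :=
  z₀ ∈ D.carrier ∧ ∀ x ∈ frontier D.carrier, 0 < ⟪x - z₀, D.nu x⟫

/-- `Ω` is strictly star-shaped. -/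
def C2Domain.StrictlyStarShaped {n : ℕ} (D : C2Domain n) : Prop :=
  ∃ z₀, D.StrictlyStarShapedAt z₀

/-- The Pohozaev boundary term `∫_{∂Ω} (∂u/∂ν)² (x·ν(x)) dS`, with `dS` the
`(n-1)`-dimensional Hausdorff measure on `∂Ω`. -/
def pohozaevBoundary {n : ℕ} (D : C2Domain n) (u : En n → ℝ) : ℝ :=
  ∫ x in frontier D.carrier, (normalDeriv D u x) ^ 2 * ⟪x, D.nu x⟫ ∂ μH[(n : ℝ) - 1]

/-- Condition (★). -/
def StarCond (n : ℕ) (s : ℝ) (Ω : Set (En n)) (u : En n → ℝ) : Prop :=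
  ∃ C > 0, ∃ γ ∈ Set.Ioo (0:ℝ) 1, ∀ x ∈ Ω,
    ‖hess n u x‖ ≤ C * infDist x (frontier Ω) ^ (γ - 1) ∧
    |u x| ≤ C * infDist x (frontier Ω) ∧
    |fracLap n s u x| ≤ C * (1 + (if s < 1/2 then 1 else 0)
      + (if s = 1/2 then |Real.log (infDist x (frontier Ω))| else 0)
      + (if 1/2 < s then infDist x (frontier Ω) ^ (1 - 2*s) else 0))

section Frontier

variable {E : Type*} [NormedAddCommGroup E] [NormedSpace ℝ E] {Ω : Set E} {x : E}

theorem infDist_frontier_pos (hΩ : IsOpen Ω) (hΩ_univ : Ω ≠ univ) (hx : x ∈ Ω) :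
    0 < infDist x (frontier Ω) := by
  have h_frontier : (frontier Ω).Nonempty := nonempty_frontier_iff.2 ⟨⟨x, hx⟩, hΩ_univ⟩
  refine (isClosed_frontier.notMem_iff_infDist_pos h_frontier).1 fun hx' => ?_
  exact hΩ.inter_frontier_eq.subset ⟨hx, hx'⟩

theorem ball_infDist_frontier_subset [FiniteDimensional ℝ E] (hΩ_univ : Ω ≠ univ) (hx : x ∈ Ω) :
    ball x (infDist x (frontier Ω)) ⊆ Ω := by
  obtain ⟨y, hy, hxy⟩ := exists_mem_frontier_infDist_compl_eq_dist hx hΩ_univ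
  calc ball x (infDist x (frontier Ω)) ⊆ ball x (infDist x Ωᶜ) :=
        ball_subset_ball (hxy ▸ infDist_le_dist_of_mem hy)
    _ ⊆ Ω := ball_infDist_compl_subset

end Frontier

section SecondDifference

variable {E : Type*} [NormedAddCommGroup E] {u : E → ℝ} {x y : E}

/-- The symmetric second difference `2 u(x) - u(x + y) - u(x - y)`, the numerator of the integrand
of the fractional Laplacian. -/
def secondDiff (u : E → ℝ) (x y : E) : ℝ := 2 * u x - u (x + y) - u (x - y)

theorem continuous_secondDiff (hu : Continuous u) : Continuous (secondDiff u x) := by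
  unfold secondDiff
  fun_prop

theorem abs_secondDiff_le_of_abs_le {M : ℝ} (hu : ∀ z, |u z| ≤ M) :
    |secondDiff u x y| ≤ 4 * M := by
  have hx := abs_le.1 (hu x)
  have hadd := abs_le.1 (hu (x + y))
  have hsub := abs_le.1 (hu (x - y))
  exact abs_le.2 ⟨by unfold secondDiff; linarith, by unfold secondDiff; linarith⟩

theorem abs_secondDiff_le_of_lipschitzWith {L : ℝ≥0} (hu : LipschitzWith L u) :
    |secondDiff u x y| ≤ 2 * L * ‖y‖ := by
  have hadd : |u x - u (x + y)| ≤ L * ‖y‖ := by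
    simpa [Real.dist_eq] using hu.dist_le_mul x (x + y)
  have hsub : |u x - u (x - y)| ≤ L * ‖y‖ := by
    simpa [Real.dist_eq, dist_eq_norm] using hu.dist_le_mul x (x - y)
  calc |secondDiff u x y| = |(u x - u (x + y)) + (u x - u (x - y))| := by
        congr 1; unfold secondDiff; ring
    _ ≤ |u x - u (x + y)| + |u x - u (x - y)| := abs_add_le _ _
    _ ≤ 2 * L * ‖y‖ := by linarith

variable [NormedSpace ℝ E]

theorem hasFDerivAt_secondDiff (hadd : DifferentiableAt ℝ u (x + y))
    (hsub : DifferentiableAt ℝ u (x - y)) :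
    HasFDerivAt (secondDiff u x) (fderiv ℝ u (x - y) - fderiv ℝ u (x + y)) y := by
  have hadd' : HasFDerivAt (fun z => u (x + z)) (fderiv ℝ u (x + y)) y :=
    hadd.hasFDerivAt.comp y ((hasFDerivAt_id y).const_add x)
  have hsub' : HasFDerivAt (fun z => u (x - z)) (-fderiv ℝ u (x - y)) y :=
    (hsub.hasFDerivAt.comp y ((hasFDerivAt_id y).const_sub x)).congr_fderiv
      (ContinuousLinearMap.comp_neg _ _)
  refine ((hadd'.const_sub (2 * u x)).sub hsub').congr_fderiv ?_
  abel

theorem norm_fderiv_sub_fderiv_add_le_of_norm_fderiv_fderiv_le {H ρ : ℝ}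
    (hu : ∀ z ∈ closedBall x ρ, ContDiffAt ℝ 2 u z)
    (hH : ∀ z ∈ closedBall x ρ, ‖fderiv ℝ (fderiv ℝ u) z‖ ≤ H) (hy : ‖y‖ ≤ ρ) :
    ‖fderiv ℝ u (x - y) - fderiv ℝ u (x + y)‖ ≤ 2 * H * ‖y‖ := by
  have h_diff : ∀ z ∈ closedBall x ρ, DifferentiableAt ℝ (fderiv ℝ u) z := fun z hz =>
    ((hu z hz).fderiv_right (m := 1) (by norm_num)).differentiableAt (by norm_num)
  calc ‖fderiv ℝ u (x - y) - fderiv ℝ u (x + y)‖ ≤ H * ‖(x - y) - (x + y)‖ :=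
        (convex_closedBall x ρ).norm_image_sub_le_of_norm_fderiv_le h_diff hH
          (by simpa) (by simpa [dist_eq_norm])
    _ = H * ‖(2 : ℝ) • y‖ := by
        rw [show (x - y) - (x + y) = -((2 : ℝ) • y) by rw [two_smul]; abel, norm_neg]
    _ = 2 * H * ‖y‖ := by rw [norm_smul, Real.norm_ofNat]; ring

theorem abs_secondDiff_le_of_norm_fderiv_fderiv_le {H : ℝ}
    (hu : ∀ z ∈ closedBall x ‖y‖, ContDiffAt ℝ 2 u z)
    (hH : ∀ z ∈ closedBall x ‖y‖, ‖fderiv ℝ (fderiv ℝ u) z‖ ≤ H) :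
    |secondDiff u x y| ≤ 2 * H * ‖y‖ ^ 2 := by
  have hH_nonneg : 0 ≤ H := by
    have := hH x (mem_closedBall_self (norm_nonneg y))
    exact le_trans (by positivity) this
  have h_diff : ∀ z ∈ closedBall x ‖y‖, DifferentiableAt ℝ u z := fun z hz =>
    (hu z hz).differentiableAt (by norm_num)
  have h_hasFDeriv : ∀ z ∈ closedBall (0 : E) ‖y‖, HasFDerivWithinAt (secondDiff u x)
      (fderiv ℝ u (x - z) - fderiv ℝ u (x + z)) (closedBall 0 ‖y‖) z := fun z hz =>
    (hasFDerivAt_secondDiff (h_diff _ (by simpa using hz))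
      (h_diff _ (by simpa [dist_eq_norm] using hz))).hasFDerivWithinAt
  have h_deriv_le : ∀ z ∈ closedBall (0 : E) ‖y‖,
      ‖fderiv ℝ u (x - z) - fderiv ℝ u (x + z)‖ ≤ 2 * H * ‖y‖ := by
    intro z hz
    have hzy : ‖z‖ ≤ ‖y‖ := mem_closedBall_zero_iff.1 hz
    exact (norm_fderiv_sub_fderiv_add_le_of_norm_fderiv_fderiv_le hu hH hzy).trans (by gcongr)
  have h_zero : secondDiff u x 0 = 0 := by simp [secondDiff, two_mul]
  calc |secondDiff u x y| = ‖secondDiff u x y - secondDiff u x 0‖ := by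
        rw [h_zero, sub_zero, Real.norm_eq_abs]
    _ ≤ 2 * H * ‖y‖ * ‖y - 0‖ :=
        (convex_closedBall (0 : E) ‖y‖).norm_image_sub_le_of_norm_hasFDerivWithin_le h_hasFDeriv
          h_deriv_le (mem_closedBall_self (norm_nonneg y)) (mem_closedBall_zero_iff.2 le_rfl)
    _ = 2 * H * ‖y‖ ^ 2 := by rw [sub_zero]; ring

end SecondDifference

section PolarCoordinates

theorem pow_sub_one_mul_rpow_div_rpow {m : ℕ} (hm : 0 < m) {r : ℝ} (hr : 0 < r) (a σ : ℝ) :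
    r ^ (m - 1) * (r ^ a / r ^ (m + σ)) = r ^ (a - 1 - σ) := by
  rw [← Real.rpow_natCast, ← Real.rpow_sub hr, ← Real.rpow_add hr, Nat.cast_pred hm]
  ring_nf

theorem integrable_and_integral_eq_add_setIntegral_norm_preimage {E F : Type*}
    [NormedAddCommGroup E] [MeasurableSpace E] [BorelSpace E] {μ : Measure E} [NullSingletonClass μ]
    [NormedAddCommGroup F] [NormedSpace ℝ F] {f : E → F} {ρ R : ℝ} (hρ : 0 ≤ ρ) (hρR : ρ ≤ R)
    (h_near : IntegrableOn f (norm ⁻¹' Ioc 0 ρ) μ) (h_mid : IntegrableOn f (norm ⁻¹' Ioc ρ R) μ)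
    (h_far : IntegrableOn f (norm ⁻¹' Ioi R) μ) :
    Integrable f μ ∧ ∫ y, f y ∂μ = ∫ y in norm ⁻¹' Ioc 0 ρ, f y ∂μ +
      (∫ y in norm ⁻¹' Ioc ρ R, f y ∂μ + ∫ y in norm ⁻¹' Ioi R, f y ∂μ) := by
  have h_cover : (norm ⁻¹' Ioc 0 ρ ∪ (norm ⁻¹' Ioc ρ R ∪ norm ⁻¹' Ioi R) : Set E) = {0}ᶜ := by
    rw [← preimage_union, ← preimage_union, Ioc_union_Ioi_eq_Ioi hρR, Ioc_union_Ioi_eq_Ioi hρ]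
    ext y
    simp
  have h_disj_far : Disjoint (norm ⁻¹' Ioc ρ R : Set E) (norm ⁻¹' Ioi R) :=
    Ioc_disjoint_Ioi_same.preimage _
  have h_disj_near : Disjoint (norm ⁻¹' Ioc 0 ρ : Set E) (norm ⁻¹' Ioc ρ R ∪ norm ⁻¹' Ioi R) := by
    rw [← preimage_union, Ioc_union_Ioi_eq_Ioi hρR]
    exact Ioc_disjoint_Ioi_same.preimage _
  rw [← setIntegral_union h_disj_far (measurable_norm measurableSet_Ioi) h_mid h_far,
    ← setIntegral_union h_disj_near
      ((measurable_norm measurableSet_Ioc).union (measurable_norm measurableSet_Ioi))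
      h_near (h_mid.union h_far), h_cover, restrict_compl_singleton]
  refine ⟨?_, rfl⟩
  rw [← restrict_compl_singleton (μ := μ) 0, ← h_cover]
  exact h_near.union (h_mid.union h_far)

open Module (finrank)

variable {E : Type*} [NormedAddCommGroup E] [NormedSpace ℝ E] [FiniteDimensional ℝ E]
  [Nontrivial E] [MeasurableSpace E] [BorelSpace E] {μ : Measure E} [μ.IsAddHaarMeasure]
  {S : Set ℝ}

theorem integrableOn_fun_norm_preimage_iff {F : Type*} [NormedAddCommGroup F] [NormedSpace ℝ F]
    {g : ℝ → F} (hS : MeasurableSet S) (hS_pos : S ⊆ Ioi 0) :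
    IntegrableOn (fun y : E => g ‖y‖) (norm ⁻¹' S) μ ↔
      IntegrableOn (fun r => r ^ (finrank ℝ E - 1) • g r) S := by
  rw [← integrable_indicator_iff (measurable_norm hS)]
  change Integrable (fun y : E => S.indicator g ‖y‖) μ ↔ _
  rw [integrable_fun_norm_addHaar, ← indicator_smul, integrableOn_indicator_iff hS,
    inter_eq_left.2 hS_pos]

theorem setIntegral_fun_norm_preimage {F : Type*} [NormedAddCommGroup F] [NormedSpace ℝ F]
    (g : ℝ → F) (hS : MeasurableSet S) (hS_pos : S ⊆ Ioi 0) :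
    ∫ y in norm ⁻¹' S, g ‖y‖ ∂μ =
      finrank ℝ E • μ.real (ball 0 1) • ∫ r in S, r ^ (finrank ℝ E - 1) • g r := by
  rw [← integral_indicator (measurable_norm hS)]
  change ∫ y : E, S.indicator g ‖y‖ ∂μ = _
  rw [integral_fun_norm_addHaar, ← indicator_smul, setIntegral_indicator hS,
    inter_eq_right.2 hS_pos]

theorem integrableOn_and_abs_setIntegral_div_norm_rpow_le {w : E → ℝ} {a c σ : ℝ}
    (hw : AEStronglyMeasurable w μ) (hS : MeasurableSet S) (hS_pos : S ⊆ Ioi 0)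
    (hS_int : IntegrableOn (fun r => r ^ (a - 1 - σ)) S)
    (hwc : ∀ y, ‖y‖ ∈ S → |w y| ≤ c * ‖y‖ ^ a) :
    IntegrableOn (fun y => w y / ‖y‖ ^ (finrank ℝ E + σ)) (norm ⁻¹' S) μ ∧
      |∫ y in norm ⁻¹' S, w y / ‖y‖ ^ (finrank ℝ E + σ) ∂μ| ≤
        finrank ℝ E * μ.real (ball 0 1) * (c * ∫ r in S, r ^ (a - 1 - σ)) := by
  set g : ℝ → ℝ := fun r => c * (r ^ a / r ^ (finrank ℝ E + σ))
  have h_radial : EqOn (fun r => r ^ (finrank ℝ E - 1) • g r) (fun r => c * r ^ (a - 1 - σ)) S := by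
    intro r hr
    simp only [g, smul_eq_mul, mul_left_comm _ c,
      pow_sub_one_mul_rpow_div_rpow Module.finrank_pos (hS_pos hr)]
  have hg : IntegrableOn (fun y : E => g ‖y‖) (norm ⁻¹' S) μ := by
    rw [integrableOn_fun_norm_preimage_iff hS hS_pos, integrableOn_congr_fun h_radial hS]
    exact hS_int.const_mul c
  have h_le : ∀ᵐ y ∂μ.restrict (norm ⁻¹' S), ‖w y / ‖y‖ ^ (finrank ℝ E + σ)‖ ≤ g ‖y‖ := by
    refine ae_restrict_of_forall_mem (measurable_norm hS) fun y hy => ?_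
    have h_pow : 0 ≤ ‖y‖ ^ (finrank ℝ E + σ) := by positivity
    rw [norm_div, Real.norm_of_nonneg h_pow, Real.norm_eq_abs]
    exact (div_le_div_of_nonneg_right (hwc y hy) h_pow).trans_eq (mul_div_assoc _ _ _)
  have h_meas : AEStronglyMeasurable (fun y => w y / ‖y‖ ^ (finrank ℝ E + σ)) μ :=
    hw.div₀ (measurable_norm.pow_const _).aestronglyMeasurable
  refine ⟨hg.mono' h_meas.restrict h_le, (norm_integral_le_of_norm_le hg h_le).trans_eq ?_⟩
  rw [setIntegral_fun_norm_preimage g hS hS_pos, setIntegral_congr_fun hS h_radial,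
    integral_const_mul, nsmul_eq_mul, smul_eq_mul, mul_assoc]

theorem integrable_and_abs_integral_div_norm_rpow_le {w : E → ℝ} {A B D σ ρ R : ℝ}
    (hw : AEStronglyMeasurable w μ) (hσ : σ ∈ Ioo 0 2) (hρ : 0 < ρ) (hρR : ρ ≤ R)
    (hA : ∀ y, ‖y‖ ≤ ρ → |w y| ≤ A * ‖y‖ ^ 2) (hB : ∀ y, |w y| ≤ B * ‖y‖) (hD : ∀ y, |w y| ≤ D) :
    Integrable (fun y => w y / ‖y‖ ^ (finrank ℝ E + σ)) μ ∧
      |∫ y, w y / ‖y‖ ^ (finrank ℝ E + σ) ∂μ| ≤ finrank ℝ E * μ.real (ball 0 1) *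
        (A * (ρ ^ (2 - σ) / (2 - σ)) + B * (∫ r in ρ..R, r ^ (-σ)) + D * (R ^ (-σ) / σ)) := by
  obtain ⟨hσ_pos, hσ_lt⟩ := hσ
  have hR : 0 < R := hρ.trans_le hρR
  obtain ⟨hint_near, h_near⟩ := integrableOn_and_abs_setIntegral_div_norm_rpow_le (a := 2)
    (S := Ioc 0 ρ) hw measurableSet_Ioc Ioc_subset_Ioi_self
    ((intervalIntegrable_iff_integrableOn_Ioc_of_le hρ.le).1
      (intervalIntegral.intervalIntegrable_rpow' (by linarith)))
    (fun y hy => by simpa only [Real.rpow_two] using hA y hy.2)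
  obtain ⟨hint_mid, h_mid⟩ := integrableOn_and_abs_setIntegral_div_norm_rpow_le (a := 1) (σ := σ)
    (S := Ioc ρ R) hw measurableSet_Ioc (fun r hr => hρ.trans hr.1)
    ((intervalIntegrable_iff_integrableOn_Ioc_of_le hρR).1
      (intervalIntegral.intervalIntegrable_rpow (.inr (notMem_uIcc_of_lt hρ hR))))
    (fun y _ => by simpa only [Real.rpow_one] using hB y)
  obtain ⟨hint_far, h_far⟩ := integrableOn_and_abs_setIntegral_div_norm_rpow_le (a := 0) (σ := σ)
    (S := Ioi R) hw measurableSet_Ioi (Ioi_subset_Ioi hR.le)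
    (integrableOn_Ioi_rpow_of_lt (by linarith) hR)
    (fun y _ => by simpa only [Real.rpow_zero, mul_one] using hD y)
  rw [← intervalIntegral.integral_of_le hρ.le, integral_rpow (.inl (by linarith)),
    Real.zero_rpow (by linarith), sub_zero, show 2 - 1 - σ + 1 = 2 - σ by ring] at h_near
  rw [← intervalIntegral.integral_of_le hρR, show 1 - 1 - σ = -σ by ring] at h_mid
  rw [integral_Ioi_rpow_of_lt (by linarith) hR, show 0 - 1 - σ + 1 = -σ by ring,
    neg_div_neg_eq] at h_far
  obtain ⟨h_int, h_eq⟩ := integrable_and_integral_eq_add_setIntegral_norm_preimage hρ.le hρR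
    hint_near hint_mid hint_far
  refine ⟨h_int, ?_⟩
  rw [h_eq, mul_add, mul_add, add_assoc]
  exact (abs_add_le _ _).trans (add_le_add h_near ((abs_add_le _ _).trans (add_le_add h_mid h_far)))

end PolarCoordinates

section BlowupRate

/-- The rate `1 + 𝟙_{s=1/2} |log d| + 𝟙_{s>1/2} d^{1-2s}` at which `(-Δ)ˢu` may grow at distance `d`
from the boundary. -/
def fracLapRate (s d : ℝ) : ℝ :=
  1 + (if s = 1 / 2 then |Real.log d| else 0) + (if 1 / 2 < s then d ^ (1 - 2 * s) else 0)

variable {s : ℝ}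

theorem fracLapRate_of_lt (hs : s < 1 / 2) (d : ℝ) : fracLapRate s d = 1 := by
  rw [fracLapRate, if_neg hs.ne, if_neg hs.le.not_gt, add_zero, add_zero]

theorem fracLapRate_one_half (d : ℝ) : fracLapRate (1 / 2) d = 1 + |Real.log d| := by
  simp [fracLapRate]

theorem fracLapRate_of_gt (hs : 1 / 2 < s) (d : ℝ) : fracLapRate s d = 1 + d ^ (1 - 2 * s) := by
  rw [fracLapRate, if_neg hs.ne', if_pos hs, add_zero]

theorem one_le_fracLapRate {d : ℝ} (hd : 0 ≤ d) : 1 ≤ fracLapRate s d := by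
  unfold fracLapRate
  split_ifs <;> linarith [abs_nonneg (Real.log d), Real.rpow_nonneg hd (1 - 2 * s)]

theorem rpow_le_fracLapRate {α ρ : ℝ} (hα : min (2 * s - 1) 0 ≤ α) (hρ : 0 < ρ) (hρ_one : ρ ≤ 1) :
    ρ ^ (α + 1 - 2 * s) ≤ fracLapRate s ρ := by
  rcases le_or_gt s (1 / 2) with hs | hs
  · rw [min_eq_left (by linarith)] at hα
    exact (Real.rpow_le_one hρ.le hρ_one (by linarith)).trans (one_le_fracLapRate hρ.le)
  · rw [min_eq_right (by linarith)] at hα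
    rw [fracLapRate_of_gt hs]
    have : ρ ^ (α + 1 - 2 * s) ≤ ρ ^ (1 - 2 * s) :=
      Real.rpow_le_rpow_of_exponent_ge hρ hρ_one (by linarith)
    linarith

theorem abs_one_sub_rpow_le_fracLapRate {ρ : ℝ} (hs : s ≠ 1 / 2) (hρ : 0 < ρ) (hρ_one : ρ ≤ 1) :
    |1 - ρ ^ (1 - 2 * s)| ≤ fracLapRate s ρ := by
  have h_nonneg : 0 ≤ ρ ^ (1 - 2 * s) := by positivity
  rcases hs.lt_or_gt with hs | hs
  · have h_le_one : ρ ^ (1 - 2 * s) ≤ 1 := Real.rpow_le_one hρ.le hρ_one (by linarith)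
    rw [fracLapRate_of_lt hs, abs_le]
    constructor <;> linarith
  · rw [fracLapRate_of_gt hs, abs_le]
    constructor <;> linarith

/- At `s = 1/2` the inverse is `0⁻¹ = 0`, so the constant is `1`. -/
theorem integral_rpow_neg_le_fracLapRate {ρ : ℝ} (hρ : 0 < ρ) (hρ_one : ρ ≤ 1) :
    ∫ r in ρ..1, r ^ (-(2 * s)) ≤ max 1 |1 - 2 * s|⁻¹ * fracLapRate s ρ := by
  have h_rate := one_le_fracLapRate (s := s) hρ.le
  rcases eq_or_ne s (1 / 2) with rfl | hs
  · calc ∫ r in ρ..1, r ^ (-(2 * (1 / 2 : ℝ))) = ∫ r in ρ..1, r⁻¹ := by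
          norm_num [Real.rpow_neg_one]
      _ = -Real.log ρ := by rw [integral_inv_of_pos hρ one_pos, one_div, Real.log_inv]
      _ ≤ 1 * fracLapRate (1 / 2) ρ := by
          rw [fracLapRate_one_half]; linarith [neg_le_abs (Real.log ρ)]
      _ ≤ _ := by gcongr; exact le_max_left _ _
  · have h_exp : -(2 * s) ≠ -1 := fun h => hs (by linarith)
    calc ∫ r in ρ..1, r ^ (-(2 * s)) = (1 - ρ ^ (1 - 2 * s)) / (1 - 2 * s) := by
          rw [integral_rpow (.inr ⟨h_exp, notMem_uIcc_of_lt hρ one_pos⟩), Real.one_rpow,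
            neg_add_eq_sub]
      _ ≤ |1 - 2 * s|⁻¹ * |1 - ρ ^ (1 - 2 * s)| := by
          rw [inv_mul_eq_div, ← abs_div]; exact le_abs_self _
      _ ≤ |1 - 2 * s|⁻¹ * fracLapRate s ρ := by
          gcongr; exact abs_one_sub_rpow_le_fracLapRate hs hρ hρ_one
      _ ≤ _ := by gcongr; exact le_max_right _ _

theorem abs_log_min_one_div_two_le {d : ℝ} (hd : 0 < d) :
    |Real.log (min d 1 / 2)| ≤ |Real.log d| + Real.log 2 := by
  have h_min : |Real.log (min d 1)| ≤ |Real.log d| := by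
    rcases min_choice d 1 with h | h <;> simp [h]
  rw [Real.log_div (lt_min hd one_pos).ne' two_ne_zero]
  calc |Real.log (min d 1) - Real.log 2| ≤ |Real.log (min d 1)| + |Real.log 2| := abs_sub _ _
    _ ≤ |Real.log d| + Real.log 2 := by
      rw [abs_of_nonneg (Real.log_nonneg one_le_two)]; linarith

theorem min_one_div_two_rpow_le {d : ℝ} (hd : 0 < d) (hs : s ≤ 1) :
    (min d 1 / 2) ^ (1 - 2 * s) ≤ 2 * (d ^ (1 - 2 * s) + 1) := by
  have h_min : (min d 1) ^ (1 - 2 * s) ≤ d ^ (1 - 2 * s) + 1 := by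
    have h_nonneg : 0 ≤ d ^ (1 - 2 * s) := by positivity
    rcases min_choice d 1 with h | h
    · rw [h]; linarith
    · rw [h, Real.one_rpow]; linarith
  have h_two : (2 : ℝ) ^ (2 * s - 1) ≤ 2 := by
    simpa using Real.rpow_le_rpow_of_exponent_le one_le_two (show 2 * s - 1 ≤ 1 by linarith)
  calc (min d 1 / 2) ^ (1 - 2 * s) = 2 ^ (2 * s - 1) * (min d 1) ^ (1 - 2 * s) := by
        rw [Real.div_rpow (by positivity) zero_le_two, div_eq_inv_mul, ← Real.rpow_neg zero_le_two,
          neg_sub]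
    _ ≤ 2 * (d ^ (1 - 2 * s) + 1) := by gcongr

theorem fracLapRate_min_one_div_two_le {d : ℝ} (hd : 0 < d) (hs : s ≤ 1) :
    fracLapRate s (min d 1 / 2) ≤ 3 * fracLapRate s d := by
  rcases lt_trichotomy s (1 / 2) with hs' | rfl | hs'
  · rw [fracLapRate_of_lt hs', fracLapRate_of_lt hs']; norm_num
  · rw [fracLapRate_one_half, fracLapRate_one_half]
    linarith [abs_log_min_one_div_two_le hd, Real.log_two_lt_d9, abs_nonneg (Real.log d)]
  · rw [fracLapRate_of_gt hs', fracLapRate_of_gt hs']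
    linarith [min_one_div_two_rpow_le hd hs, Real.rpow_nonneg hd.le (1 - 2 * s)]

end BlowupRate

section FracLap

theorem infDist_rpow_le_of_mem_closedBall {X : Type*} [PseudoMetricSpace X] {F : Set X} {x z : X}
    {ρ p : ℝ} (hρ : 0 < ρ) (hρF : 2 * ρ ≤ infDist x F) (hp : p ≤ 0) (hz : z ∈ closedBall x ρ) :
    infDist z F ^ p ≤ ρ ^ p := by
  have h_lip : infDist x F ≤ infDist z F + dist x z := infDist_le_infDist_add_dist
  have h_dist : dist x z ≤ ρ := mem_closedBall'.1 hz
  exact Real.rpow_le_rpow_of_nonpos hρ (by linarith) hp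

variable {n : ℕ} {s α K M ρ : ℝ} {L : ℝ≥0} {u : En n → ℝ} {x : En n}

theorem integrable_and_abs_fracLap_le [Nontrivial (En n)] {H : ℝ} (hs : s ∈ Ioo 0 1) (hρ : 0 < ρ)
    (hρ_one : ρ ≤ 1) (hM : ∀ z, |u z| ≤ M) (hL : LipschitzWith L u)
    (hu : ∀ z ∈ closedBall x ρ, ContDiffAt ℝ 2 u z) (hH : ∀ z ∈ closedBall x ρ, ‖hess n u z‖ ≤ H) :
    Integrable (fun y => secondDiff u x y / ‖y‖ ^ ((n : ℝ) + 2 * s)) ∧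
      |fracLap n s u x| ≤ |cK n s / 2| * (n * volume.real (ball (0 : En n) 1) *
        (2 * H * (ρ ^ (2 - 2 * s) / (2 - 2 * s)) + 2 * L * (∫ r in ρ..1, r ^ (-(2 * s)))
          + 4 * M * (1 / (2 * s)))) := by
  have h_near : ∀ y, ‖y‖ ≤ ρ → |secondDiff u x y| ≤ 2 * H * ‖y‖ ^ 2 := fun y hy =>
    have h_sub := closedBall_subset_closedBall hy
    abs_secondDiff_le_of_norm_fderiv_fderiv_le (fun z hz => hu z (h_sub hz))
      (fun z hz => hH z (h_sub hz))
  have h_kernel := integrable_and_abs_integral_div_norm_rpow_le (μ := volume) (σ := 2 * s)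
    (continuous_secondDiff hL.continuous).aestronglyMeasurable
    ⟨by linarith [hs.1], by linarith [hs.2]⟩ hρ hρ_one h_near
    (fun _ => abs_secondDiff_le_of_lipschitzWith hL) (fun _ => abs_secondDiff_le_of_abs_le hM)
  rw [finrank_euclideanSpace_fin, Real.one_rpow] at h_kernel
  refine ⟨h_kernel.1, ?_⟩
  rw [fracLap, abs_mul]
  exact mul_le_mul_of_nonneg_left h_kernel.2 (abs_nonneg _)

/-- The constant in front of `fracLapRate s ρ` when the Hessian is at most `K * ρ ^ (α - 1)` on
`closedBall x ρ`; it collects the contributions of `|y| ≤ ρ`, `ρ < |y| ≤ 1` and `1 < |y|`. -/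
def fracLapConst (n : ℕ) (s K M : ℝ) (L : ℝ≥0) : ℝ :=
  |cK n s / 2| * (n * volume.real (ball (0 : En n) 1) *
    (2 * K / (2 - 2 * s) + 2 * L * max 1 |1 - 2 * s|⁻¹ + 4 * M / (2 * s)))

theorem fracLapConst_nonneg (hs : s ∈ Ioo 0 1) (hK : 0 ≤ K) (hM : 0 ≤ M) :
    0 ≤ fracLapConst n s K M L := by
  have h_pos : 0 < s := hs.1
  have h_sub_pos : 0 < 2 - 2 * s := by linarith [hs.2]
  unfold fracLapConst
  positivity

theorem abs_fracLap_le_fracLapConst_mul_fracLapRate [Nontrivial (En n)] (hs : s ∈ Ioo 0 1)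
    (hα : min (2 * s - 1) 0 ≤ α) (hK : 0 ≤ K) (hρ : 0 < ρ) (hρ_one : ρ ≤ 1)
    (hM : ∀ z, |u z| ≤ M) (hL : LipschitzWith L u) (hu : ∀ z ∈ closedBall x ρ, ContDiffAt ℝ 2 u z)
    (hH : ∀ z ∈ closedBall x ρ, ‖hess n u z‖ ≤ K * ρ ^ (α - 1)) :
    |fracLap n s u x| ≤ fracLapConst n s K M L * fracLapRate s ρ := by
  have hs_pos : 0 < s := hs.1
  have hs_sub_pos : 0 < 2 - 2 * s := by linarith [hs.2]
  have hM_nonneg : 0 ≤ M := (abs_nonneg _).trans (hM x)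
  have h_near : 2 * (K * ρ ^ (α - 1)) * (ρ ^ (2 - 2 * s) / (2 - 2 * s)) ≤
      2 * K / (2 - 2 * s) * fracLapRate s ρ := calc
    _ = 2 * K / (2 - 2 * s) * (ρ ^ (α - 1) * ρ ^ (2 - 2 * s)) := by ring
    _ = 2 * K / (2 - 2 * s) * ρ ^ (α + 1 - 2 * s) := by rw [← Real.rpow_add hρ]; ring_nf
    _ ≤ _ := by gcongr; exact rpow_le_fracLapRate hα hρ hρ_one
  have h_mid : 2 * L * (∫ r in ρ..1, r ^ (-(2 * s))) ≤
      2 * L * (max 1 |1 - 2 * s|⁻¹ * fracLapRate s ρ) := by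
    gcongr; exact integral_rpow_neg_le_fracLapRate hρ hρ_one
  have h_far : 4 * M * (1 / (2 * s)) ≤ 4 * M / (2 * s) * fracLapRate s ρ := by
    rw [mul_one_div]
    exact le_mul_of_one_le_right (by positivity) (one_le_fracLapRate hρ.le)
  refine (integrable_and_abs_fracLap_le hs hρ hρ_one hM hL hu hH).2.trans ?_
  rw [fracLapConst, mul_assoc |cK n s / 2|, mul_assoc (n * volume.real _)]
  gcongr
  linarith

/- The radius `min d 1 / 2` stays below `1` as well as below `d / 2`, so the constant does not see
the size of `Ω`. -/
theorem fracLap_bound_of_hessian_bound_general (n : ℕ) (s α K M : ℝ) (L : ℝ≥0)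
    (hs : s ∈ Set.Ioo (0 : ℝ) 1) (hα : min (2 * s - 1) 0 ≤ α) (hα_one : α ≤ 1) :
    ∃ C > (0 : ℝ), ∀ (Ω : Set (En n)) (u : En n → ℝ),
      IsOpen Ω → Ω ≠ univ →
      (∀ x, |u x| ≤ M) → LipschitzWith L u →
      ContDiffOn ℝ 2 u Ω →
      (∀ x ∈ Ω, ‖hess n u x‖ ≤ K * infDist x (frontier Ω) ^ (α - 1)) →
      ∀ x ∈ Ω,
        Integrable (fun y => secondDiff u x y / ‖y‖ ^ ((n : ℝ) + 2 * s)) ∧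
        |fracLap n s u x| ≤ C * fracLapRate s (infDist x (frontier Ω)) := by
  refine ⟨max 1 (3 * fracLapConst n s K M L), by positivity, ?_⟩
  intro Ω u hΩ hΩ_univ hM hL hu hH x hx
  obtain ⟨z, hz⟩ := (ne_univ_iff_exists_notMem Ω).1 hΩ_univ
  have : Nontrivial (En n) := ⟨x, z, fun hxz => hz (hxz ▸ hx)⟩
  set d := infDist x (frontier Ω)
  have hd : 0 < d := infDist_frontier_pos hΩ hΩ_univ hx
  have hK : 0 ≤ K := by
    have h_nonneg : 0 ≤ K * d ^ (α - 1) := le_trans (by positivity) (hH x hx)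
    exact nonneg_of_mul_nonneg_left h_nonneg (by positivity)
  set ρ := min d 1 / 2 with hρ_def
  have hρ : 0 < ρ := by positivity
  have hρ_one : ρ ≤ 1 := by linarith [min_le_right d 1, hρ_def]
  have hρd : 2 * ρ ≤ d := by linarith [min_le_left d 1, hρ_def]
  have h_sub : closedBall x ρ ⊆ Ω :=
    (closedBall_subset_ball (by linarith)).trans (ball_infDist_frontier_subset hΩ_univ hx)
  have hu_ball : ∀ z ∈ closedBall x ρ, ContDiffAt ℝ 2 u z := fun z hz =>
    hu.contDiffAt (hΩ.mem_nhds (h_sub hz))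
  have hH_ball : ∀ z ∈ closedBall x ρ, ‖hess n u z‖ ≤ K * ρ ^ (α - 1) := fun z hz =>
    (hH z (h_sub hz)).trans (mul_le_mul_of_nonneg_left
      (infDist_rpow_le_of_mem_closedBall hρ hρd (by linarith) hz) hK)
  refine ⟨(integrable_and_abs_fracLap_le hs hρ hρ_one hM hL hu_ball hH_ball).1, ?_⟩
  have hC : 0 ≤ fracLapConst n s K M L :=
    fracLapConst_nonneg hs hK ((abs_nonneg _).trans (hM x))
  calc |fracLap n s u x| ≤ fracLapConst n s K M L * fracLapRate s ρ :=
        abs_fracLap_le_fracLapConst_mul_fracLapRate hs hα hK hρ hρ_one hM hL hu_ball hH_ball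
    _ ≤ fracLapConst n s K M L * (3 * fracLapRate s d) := by
        gcongr; exact fracLapRate_min_one_div_two_le hd hs.2.le
    _ = 3 * fracLapConst n s K M L * fracLapRate s d := by ring
    _ ≤ max 1 (3 * fracLapConst n s K M L) * fracLapRate s d := by
        gcongr
        · linarith [one_le_fracLapRate (s := s) hd.le]
        · exact le_max_right _ _

end FracLap

/-- bound on `(-Δ)ˢu` from a Hessian blow-up estimate: if `u` is bounded
and Lipschitz on `ℝⁿ`, `C²` in a bounded open set `Ω` with `|D²u| ≤ K dist(·,∂Ω)^{α-1}`,
then with a constant `C` depending only on `n, s, α, K, ‖u‖_{C^{0,1}(ℝⁿ)}` and `diam Ω`,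
the fractional Laplacian integral converges absolutely in `Ω` and
`|(-Δ)ˢu(x)| ≤ C(1 + 𝟙_{s=1/2}|log dist(x,∂Ω)| + 𝟙_{s>1/2} dist(x,∂Ω)^{1-2s})`. -/
theorem fracLap_bound_of_hessian_bound (n : ℕ) (hn : 1 ≤ n) (s α K M R : ℝ) (L : ℝ≥0)
    (hs : s ∈ Set.Ioo (0:ℝ) 1) (hα : α ∈ Set.Ioo (0:ℝ) 1) (hK : 0 < K) :
    ∃ C > (0:ℝ), ∀ (Ω : Set (En n)) (u : En n → ℝ),
      IsOpen Ω → IsBounded Ω → Metric.diam Ω ≤ R →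
      (∀ x, |u x| ≤ M) → LipschitzWith L u →
      ContDiffOn ℝ 2 u Ω →
      (∀ x ∈ Ω, ‖hess n u x‖ ≤ K * infDist x (frontier Ω) ^ (α - 1)) →
      ∀ x ∈ Ω,
        Integrable (fun y : En n =>
          (2 * u x - u (x + y) - u (x - y)) / ‖y‖ ^ ((n : ℝ) + 2 * s)) ∧
        |fracLap n s u x| ≤ C * (1
          + (if s = 1/2 then |Real.log (infDist x (frontier Ω))| else 0)
          + (if 1/2 < s then infDist x (frontier Ω) ^ (1 - 2*s) else 0)) := by
  have : Nonempty (Fin n) := ⟨⟨0, hn⟩⟩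
  obtain ⟨C, hC, h_bound⟩ := fracLap_bound_of_hessian_bound_general n s α K M L hs
    ((min_le_right _ _).trans hα.1.le) hα.2.le
  refine ⟨C, hC, fun Ω u hΩ hΩ_bdd _ => h_bound Ω u hΩ ?_⟩
  rintro rfl
  exact NormedSpace.unbounded_univ ℝ (En n) hΩ_bdd
end
end

section
/- Let n ≥ 1, s ∈ (0,1), C₀ > 0, let Ω ⊂ ℝⁿ be a bounded open set, and let u : ℝⁿ → ℝ be bounded, Lipschitz, and twice continuously differentiable in Ω, with |D²u(x)| ≤ C₀·dist(x,∂Ω)^{−1} for all x ∈ Ω and |u(x)| ≤ C₀·dist(x,Ωᶜ) for all x ∈ ℝⁿ. Then there is a constant C (depending on n, s, C₀ and ‖u‖_{C^{0,1}(ℝⁿ)}) such that for every β ∈ [1−s, 2−s] and every ϱ ∈ (0,1), 𝔤 = (−Δ)^{s/2}u satisfies ‖𝔤‖_{C^{β}(Ω̆_ϱ)} ≤ C·ϱ^{1−s−β}, where Ω̆_ϱ = {x ∈ ℝⁿ : dist(x,∂Ω) ≥ ϱ}. -/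
open MeasureTheory Real Set Metric Bornology Filter
open scoped RealInnerProductSpace ENNReal NNReal Pointwise

noncomputable section

/-! Since `u` is Lipschitz, it is differentiable at `x + z` for almost every `z` (Rademacher), so
one may differentiate under the integral sign: the derivative of `T u`, with `T u (x) = ∫ (u(x) -
u(x+z)) |z|^{-(d+s)} dz`, is `T (Du)` at every point off `∂Ω`. All quantities are then estimated
through the scaling identity `∫ min(a|z|, b) |z|^{-(d+s)} dz = K a^s b^{1-s}`. Only the Hölder
bound for `T (Du)` needs more, because `Du` is merely bounded across `∂Ω`: the kernel is split at
a scale `ρ` comparable to the distance to `∂Ω`, the near part is controlled by the Lipschitz bound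
for `Du` on a ball of radius `2ρ`, and in the far part the increment is moved from `Du` onto the
truncated kernel, which is Lipschitz in `L¹`. Intermediate exponents follow by interpolation. -/

section Increments

variable {E F : Type*} [NormedAddCommGroup E] [NormedAddCommGroup F]

theorem norm_sub_le_two_mul {α : Type*} {v : α → F} {B : ℝ} (hB : ∀ x, ‖v x‖ ≤ B) (x y : α) :
    ‖v x - v y‖ ≤ 2 * B := by
  linarith [norm_sub_le (v x) (v y), hB x, hB y]

theorem norm_sub_comp_add_le_of_lipschitzWith {u : E → F} {B : ℝ} {L : ℝ≥0}
    (hB : ∀ x, ‖u x‖ ≤ B) (hL : LipschitzWith L u) (x z : E) :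
    ‖u x - u (x + z)‖ ≤ min (L * ‖z‖) (2 * B) := by
  refine le_min ?_ (norm_sub_le_two_mul hB _ _)
  simpa using hL.norm_sub_le x (x + z)

theorem norm_sub_comp_add_le_of_lipschitzOnWith {v : E → F} {B ρ : ℝ} {A : ℝ≥0} (hρ : 0 < ρ)
    (hB : ∀ x, ‖v x‖ ≤ B) {x : E} (hA : LipschitzOnWith A v (ball x ρ)) (z : E) :
    ‖v x - v (x + z)‖ ≤ min ((A + 2 * B * ρ⁻¹) * ‖z‖) (2 * B) := by
  have hB0 : 0 ≤ B := (norm_nonneg _).trans (hB x)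
  refine le_min ?_ (norm_sub_le_two_mul hB _ _)
  rw [add_mul]
  rcases lt_or_ge ‖z‖ ρ with hz | hz
  · have h := hA.norm_sub_le (mem_ball_self hρ) (y := x + z) (by simpa using hz)
    rw [sub_add_cancel_left, norm_neg] at h
    exact h.trans (le_add_of_nonneg_right (by positivity))
  · have h : 1 ≤ ρ⁻¹ * ‖z‖ := by rwa [inv_mul_eq_div, one_le_div hρ]
    calc ‖v x - v (x + z)‖ ≤ 2 * B := norm_sub_le_two_mul hB _ _
      _ ≤ 2 * B * (ρ⁻¹ * ‖z‖) := le_mul_of_one_le_right (by positivity) h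
      _ ≤ A * ‖z‖ + 2 * B * ρ⁻¹ * ‖z‖ := by
        rw [mul_assoc (2 * B)]
        exact le_add_of_nonneg_left (by positivity)

theorem norm_sub_sub_sub_le_of_lipschitzOnWith {v : E → F} {A : ℝ≥0} {D : Set E}
    (hA : LipschitzOnWith A v D) {x y z : E} (hx : x ∈ D) (hy : y ∈ D) (hxz : x + z ∈ D)
    (hyz : y + z ∈ D) :
    ‖(v x - v (x + z)) - (v y - v (y + z))‖ ≤ min (2 * A * ‖z‖) (2 * A * ‖x - y‖) := by
  refine le_min ?_ ?_
  · have h₁ := hA.norm_sub_le hx hxz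
    have h₂ := hA.norm_sub_le hy hyz
    rw [sub_add_cancel_left, norm_neg] at h₁ h₂
    linarith [norm_sub_le (v x - v (x + z)) (v y - v (y + z))]
  · have h₁ := hA.norm_sub_le hx hy
    have h₂ := hA.norm_sub_le hxz hyz
    rw [add_sub_add_right_eq_sub] at h₂
    rw [sub_sub_sub_comm]
    linarith [norm_sub_le (v x - v y) (v (x + z) - v (y + z))]

variable [NormedSpace ℝ E] [NormedSpace ℝ F]

theorem norm_sub_sub_sub_le_of_fderiv {ρ : ℝ} {L A : ℝ≥0} {u : E → F} {x : E} (hρ : 0 < ρ)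
    (hL : LipschitzWith L u) (hu : DifferentiableOn ℝ u (ball x (2 * ρ)))
    (hA : LipschitzOnWith A (fderiv ℝ u) (ball x (2 * ρ))) {y : E} (hy : y ∈ ball x ρ) (z : E) :
    ‖(u y - u (y + z)) - (u x - u (x + z))‖ ≤
      min ((A + 2 * L * ρ⁻¹) * ‖z‖) (2 * L) * ‖y - x‖ := by
  have hglobal : ‖(u y - u (y + z)) - (u x - u (x + z))‖ ≤ 2 * L * ‖y - x‖ :=
    (norm_sub_sub_sub_le_of_lipschitzOnWith hL.lipschitzOnWith (mem_univ _) (mem_univ _)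
      (mem_univ _) (mem_univ _)).trans (min_le_right _ _)
  rw [min_mul_of_nonneg _ _ (norm_nonneg _)]
  refine le_min ?_ hglobal
  rcases lt_or_ge ‖z‖ ρ with hz | hz
  · have hmem {w : E} (hw : w ∈ ball x ρ) : w ∈ ball x (2 * ρ) ∧ w + z ∈ ball x (2 * ρ) := by
      rw [mem_ball_iff_norm] at hw
      simp only [mem_ball_iff_norm]
      refine ⟨by linarith, ?_⟩
      rw [add_sub_right_comm]
      linarith [norm_add_le (w - x) z]
    have hderiv : ∀ w ∈ ball x ρ, HasFDerivWithinAt (fun w ↦ u w - u (w + z))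
        (fderiv ℝ u w - fderiv ℝ u (w + z)) (ball x ρ) w := fun w hw ↦
      ((hu.differentiableAt (isOpen_ball.mem_nhds (hmem hw).1)).hasFDerivAt.sub
        ((hasFDerivAt_comp_add_right z).2 (hu.differentiableAt
          (isOpen_ball.mem_nhds (hmem hw).2)).hasFDerivAt)).hasFDerivWithinAt
    refine ((convex_ball x ρ).norm_image_sub_le_of_norm_hasFDerivWithin_le hderiv
      (fun w hw ↦ ?_) (mem_ball_self hρ) hy)
    have h := hA.norm_sub_le (hmem hw).1 (hmem hw).2
    rw [sub_add_cancel_left, norm_neg] at h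
    exact h.trans (mul_le_mul_of_nonneg_right (le_add_of_nonneg_right (by positivity))
      (norm_nonneg z))
  · have h : 1 ≤ ρ⁻¹ * ‖z‖ := by rwa [inv_mul_eq_div, one_le_div hρ]
    refine hglobal.trans (mul_le_mul_of_nonneg_right ?_ (norm_nonneg _))
    calc 2 * (L : ℝ) ≤ 2 * L * (ρ⁻¹ * ‖z‖) := le_mul_of_one_le_right (by positivity) h
      _ ≤ (A + 2 * L * ρ⁻¹) * ‖z‖ := by
        rw [add_mul, mul_assoc (2 * (L : ℝ))]
        exact le_add_of_nonneg_left (by positivity)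

end Increments

theorem rpow_mul_mul_rpow_one_sub {a r : ℝ} (ha : 0 ≤ a) (hr : 0 ≤ r) (s : ℝ) :
    a ^ s * (a * r) ^ (1 - s) = a * r ^ (1 - s) := by
  rw [Real.mul_rpow ha hr, ← mul_assoc, ← Real.rpow_add' ha (by simp), add_sub_cancel,
    Real.rpow_one]

theorem rpow_le_mul_rpow_of_le {t ϱ a b : ℝ} (ht : 0 ≤ t) (hϱ : t ≤ ϱ) (hb : 0 ≤ b)
    (hab : b ≤ a) : t ^ a ≤ ϱ ^ (a - b) * t ^ b := by
  rw [← sub_add_cancel a b, Real.rpow_add_of_nonneg ht (sub_nonneg.2 hab) hb, sub_add_cancel]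
  gcongr

theorem rpow_le_four_mul_rpow_of_le {t ϱ a b : ℝ} (hϱ : 0 < ϱ) (ht : ϱ / 4 ≤ t) (hab : a ≤ b)
    (hba : b ≤ a + 1) : t ^ a ≤ 4 * ϱ ^ (a - b) * t ^ b := by
  have ht0 : 0 < t := (by positivity : 0 < ϱ / 4).trans_le ht
  have h4 : (4 : ℝ) ^ (b - a) ≤ 4 :=
    Real.rpow_le_self_of_one_le (by norm_num) (by linarith)
  calc t ^ a = t ^ (a - b) * t ^ b := by rw [← Real.rpow_add ht0, sub_add_cancel]
    _ ≤ (ϱ / 4) ^ (a - b) * t ^ b :=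
      mul_le_mul_of_nonneg_right
        (Real.rpow_le_rpow_of_nonpos (by positivity) ht (by linarith)) (by positivity)
    _ = 4 ^ (b - a) * ϱ ^ (a - b) * t ^ b := by
      rw [div_eq_mul_inv, Real.mul_rpow hϱ.le (by norm_num), Real.inv_rpow (by norm_num),
        ← Real.rpow_neg (by norm_num), neg_sub, mul_comm (ϱ ^ _)]
    _ ≤ 4 * ϱ ^ (a - b) * t ^ b := by gcongr

theorem abs_rpow_neg_sub_rpow_neg_le {p ρ a b : ℝ} (hp : 1 ≤ p) (hρ : 0 < ρ) (ha : ρ ≤ a)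
    (hb : ρ ≤ b) : |a ^ (-p) - b ^ (-p)| ≤ p * ρ⁻¹ * |a - b| * (a ^ (-p) + b ^ (-p)) := by
  wlog hab : a ≤ b generalizing a b
  · rw [abs_sub_comm, abs_sub_comm a b, add_comm]
    exact this hb ha (le_of_not_ge hab)
  have ha0 : 0 < a := hρ.trans_le ha
  have hb0 : 0 < b := hρ.trans_le hb
  have hba : b ^ (-p) = a ^ (-p) * (a / b) ^ p := by
    rw [Real.div_rpow ha0.le hb0.le, Real.rpow_neg ha0.le, Real.rpow_neg hb0.le]
    field_simp
  have bernoulli : 1 + p * (a / b - 1) ≤ (a / b) ^ p := by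
    simpa using one_add_mul_self_le_rpow_one_add (s := a / b - 1)
      (by linarith [div_pos ha0 hb0]) hp
  have hratio : 1 - a / b ≤ ρ⁻¹ * |a - b| := by
    rw [abs_of_nonpos (sub_nonpos.2 hab), neg_sub, one_sub_div hb0.ne', div_eq_inv_mul]
    gcongr
  have hbp : b ^ (-p) ≤ a ^ (-p) := Real.rpow_le_rpow_of_nonpos ha0 hab (by linarith)
  calc |a ^ (-p) - b ^ (-p)| = a ^ (-p) * (1 - (a / b) ^ p) := by
        rw [abs_of_nonneg (sub_nonneg.2 hbp), hba]; ring
    _ ≤ a ^ (-p) * (p * (ρ⁻¹ * |a - b|)) := by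
        gcongr
        nlinarith
    _ ≤ p * ρ⁻¹ * |a - b| * (a ^ (-p) + b ^ (-p)) := by
        have : 0 ≤ p * ρ⁻¹ * |a - b| * b ^ (-p) := by positivity
        linarith

theorem half_le_infDist_of_mem_ball {X : Type*} [PseudoMetricSpace X] {Z : Set X} {x y : X}
    {ϱ : ℝ} (hx : ϱ ≤ infDist x Z) (hy : y ∈ ball x (ϱ / 2)) : ϱ / 2 ≤ infDist y Z := by
  rw [mem_ball, dist_comm] at hy
  linarith [infDist_le_infDist_add_dist (s := Z) (x := x) (y := y)]

theorem norm_integral_smul_comp_add_sub_le {G F : Type*} [AddCommGroup G] [MeasurableSpace G]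
    [MeasurableAdd G] {μ : Measure G} [μ.IsAddLeftInvariant] [NormedAddCommGroup F]
    [NormedSpace ℝ F] {k : G → ℝ} {v : G → F} {B : ℝ} (hk : Integrable k μ)
    (hv : AEStronglyMeasurable v μ) (hB : ∀ x, ‖v x‖ ≤ B) (x y : G) :
    ‖(∫ z, k z • v (x + z) ∂μ) - ∫ z, k z • v (y + z) ∂μ‖ ≤
      B * ∫ w, |k (w - x) - k (w - y)| ∂μ := by
  have translate (x : G) : ∫ z, k z • v (x + z) ∂μ = ∫ w, k (w - x) • v w ∂μ := by
    rw [← integral_add_left_eq_self (fun w ↦ k (w - x) • v w) x]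
    simp only [add_sub_cancel_left]
  have hint (x : G) : Integrable (fun w ↦ k (w - x) • v w) μ :=
    (hk.comp_sub_right x).smul_bdd B hv (ae_of_all μ hB)
  rw [translate, translate, ← integral_sub (hint x) (hint y), ← integral_const_mul]
  refine norm_integral_le_of_norm_le
    (((hk.comp_sub_right x).sub (hk.comp_sub_right y)).abs.const_mul B) (ae_of_all μ fun w ↦ ?_)
  rw [← sub_smul, norm_smul, Real.norm_eq_abs, mul_comm]
  exact mul_le_mul_of_nonneg_right (hB w) (abs_nonneg _)

section Kernel

variable {E : Type*} [NormedAddCommGroup E] [NormedSpace ℝ E]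

/-- The kernel `|z|^{-(d+s)}`, `d = dim E`, of the fractional Laplacian of order `s`. -/
def fracKernel (s : ℝ) (z : E) : ℝ :=
  ‖z‖ ^ (-(Module.finrank ℝ E + s))

/-- The kernel `|z|^{-(d+s)}` made constant on the ball of radius `ρ`. It carries the part of
the fractional Laplacian at distance at least `ρ`, and is Lipschitz in `L¹`. -/
def truncKernel (s ρ : ℝ) (z : E) : ℝ :=
  (max ‖z‖ ρ) ^ (-(Module.finrank ℝ E + s))

theorem fracKernel_nonneg (s : ℝ) (z : E) : 0 ≤ fracKernel s z :=
  Real.rpow_nonneg (norm_nonneg z) _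

theorem truncKernel_nonneg {ρ : ℝ} (hρ : 0 < ρ) (s : ℝ) (z : E) : 0 ≤ truncKernel s ρ z :=
  Real.rpow_nonneg (hρ.le.trans (le_max_right _ _)) _

theorem continuous_truncKernel {ρ : ℝ} (hρ : 0 < ρ) (s : ℝ) :
    Continuous (truncKernel s ρ : E → ℝ) :=
  Continuous.rpow_const (by fun_prop) fun _ ↦ Or.inl (lt_max_of_lt_right hρ).ne'

theorem truncKernel_of_le {s ρ : ℝ} {z : E} (hz : ρ ≤ ‖z‖) :
    truncKernel s ρ z = fracKernel s z := by
  rw [truncKernel, fracKernel, max_eq_left hz]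

theorem norm_fracKernel_smul_le {s m : ℝ} {F : Type*} [NormedAddCommGroup F] [NormedSpace ℝ F]
    (z : E) {w : F} (hw : ‖w‖ ≤ m) :
    ‖fracKernel s z • w‖ ≤ m * fracKernel s z := by
  rw [norm_smul, Real.norm_of_nonneg (fracKernel_nonneg s z), mul_comm]
  exact mul_le_mul_of_nonneg_right hw (fracKernel_nonneg s z)

theorem fracKernel_smul {r : ℝ} (hr : 0 < r) (s : ℝ) (z : E) :
    fracKernel s (r • z) = r ^ (-(Module.finrank ℝ E + s)) * fracKernel s z := by
  rw [fracKernel, fracKernel, norm_smul, Real.norm_of_nonneg hr.le,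
    Real.mul_rpow hr.le (norm_nonneg z)]

theorem abs_fracKernel_sub_truncKernel_le {s ρ : ℝ} (hs : 0 ≤ s) (hρ : 0 < ρ) {z : E}
    (hz : z ≠ 0) : |fracKernel s z - truncKernel s ρ z| ≤ fracKernel s z := by
  have htrunc : truncKernel s ρ z ≤ fracKernel s z :=
    Real.rpow_le_rpow_of_nonpos (norm_pos_iff.2 hz) (le_max_left _ _)
      (neg_nonpos.2 (by positivity))
  rw [abs_of_nonneg (sub_nonneg.2 htrunc)]
  exact sub_le_self _ (truncKernel_nonneg hρ s z)

theorem one_le_finrank_add [Nontrivial E] [FiniteDimensional ℝ E] {s : ℝ} (hs : 0 ≤ s) :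
    1 ≤ (Module.finrank ℝ E : ℝ) + s := by
  have : (1 : ℝ) ≤ Module.finrank ℝ E := by exact_mod_cast Module.finrank_pos (R := ℝ) (M := E)
  linarith

theorem truncKernel_le_min_mul_fracKernel [Nontrivial E] [FiniteDimensional ℝ E] {s ρ : ℝ}
    (hs : 0 ≤ s) (hρ : 0 < ρ) {z : E} (hz : z ≠ 0) :
    truncKernel s ρ z ≤ min (ρ⁻¹ * ‖z‖) 1 * fracKernel s z := by
  have hz' : 0 < ‖z‖ := norm_pos_iff.2 hz
  have hp := one_le_finrank_add (E := E) hs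
  rcases le_total ρ ‖z‖ with h | h
  · rw [truncKernel_of_le h, min_eq_right, one_mul]
    rwa [inv_mul_eq_div, one_le_div hρ]
  · rw [min_eq_left (by rwa [inv_mul_eq_div, div_le_one hρ]), truncKernel, max_eq_right h,
      fracKernel]
    set p : ℝ := Module.finrank ℝ E + s
    calc ρ ^ (-p) = ρ⁻¹ * ρ ^ (1 - p) := by
          rw [← Real.rpow_neg_one, ← Real.rpow_add hρ]; congr 1; ring
      _ ≤ ρ⁻¹ * ‖z‖ ^ (1 - p) :=
          mul_le_mul_of_nonneg_left (Real.rpow_le_rpow_of_nonpos hz' h (by linarith))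
            (by positivity)
      _ = ρ⁻¹ * ‖z‖ * ‖z‖ ^ (-p) := by
          rw [sub_eq_add_neg, Real.rpow_add hz', Real.rpow_one, mul_assoc]

theorem abs_truncKernel_sub_le [Nontrivial E] [FiniteDimensional ℝ E] {s ρ : ℝ} (hs : 0 ≤ s)
    (hρ : 0 < ρ) (z w : E) :
    |truncKernel s ρ z - truncKernel s ρ w| ≤
      (Module.finrank ℝ E + s) * ρ⁻¹ * ‖z - w‖ * (truncKernel s ρ z + truncKernel s ρ w) := by
  have hnorm : |max ‖z‖ ρ - max ‖w‖ ρ| ≤ ‖z - w‖ :=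
    (abs_max_sub_max_le_abs _ _ _).trans (abs_norm_sub_norm_le z w)
  have hz := truncKernel_nonneg hρ s z
  have hw := truncKernel_nonneg hρ s w
  refine (abs_rpow_neg_sub_rpow_neg_le (one_le_finrank_add hs) hρ (le_max_right _ _)
    (le_max_right _ _)).trans ?_
  rw [← truncKernel, ← truncKernel]
  gcongr

theorem min_mul_norm_mul_fracKernel_eq {a b : ℝ} (ha : 0 < a) (hb : 0 < b) (s : ℝ) (z : E) :
    min (a * ‖z‖) b * fracKernel s z = b * (a / b) ^ (Module.finrank ℝ E + s) *
      (min ‖(a / b) • z‖ 1 * fracKernel s ((a / b) • z)) := by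
  have hR : 0 < a / b := div_pos ha hb
  have hmin : min (a * ‖z‖) b = b * min (a / b * ‖z‖) 1 := by
    rw [mul_min_of_nonneg _ _ hb.le]
    field_simp
  rw [fracKernel_smul hR, norm_smul, Real.norm_of_nonneg hR.le, hmin, Real.rpow_neg hR.le]
  field_simp

variable [MeasurableSpace E]

/-- The integral of `min(|z|,1) |z|^{-(d+s)}`, the constant in all kernel estimates. -/
def kernelMass (μ : Measure E) (s : ℝ) : ℝ :=
  ∫ z, min ‖z‖ 1 * fracKernel s z ∂μ

theorem kernelMass_nonneg (μ : Measure E) (s : ℝ) : 0 ≤ kernelMass μ s :=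
  integral_nonneg fun z ↦ mul_nonneg (by positivity) (fracKernel_nonneg s z)

variable [BorelSpace E]

theorem measurable_fracKernel (s : ℝ) : Measurable (fracKernel s : E → ℝ) :=
  measurable_norm.pow_const _

variable [FiniteDimensional ℝ E] {μ : Measure E} [μ.IsAddHaarMeasure]

theorem integrable_min_norm_one_mul_fracKernel [Nontrivial E] {s : ℝ} (hs : s ∈ Ioo (0 : ℝ) 1) :
    Integrable (fun z : E ↦ min ‖z‖ 1 * fracKernel s z) μ := by
  obtain ⟨hs0, hs1⟩ := hs
  refine (integrable_fun_norm_addHaar μ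
    (f := fun t : ℝ ↦ min t 1 * t ^ (-(Module.finrank ℝ E + s)))).2 ?_
  have hpow : ∀ t : ℝ, 0 < t → t ^ (Module.finrank ℝ E - 1) • (min t 1 *
      t ^ (-(Module.finrank ℝ E + s))) = min t 1 * t ^ (-1 - s) := by
    intro t ht
    rw [smul_eq_mul, mul_left_comm, ← Real.rpow_natCast, ← Real.rpow_add ht,
      Nat.cast_sub Module.finrank_pos]
    congr 2
    push_cast
    ring
  refine IntegrableOn.congr_fun ?_ (fun t ht ↦ (hpow t ht).symm) measurableSet_Ioi
  rw [← Ioc_union_Ioi_eq_Ioi (zero_le_one (α := ℝ))]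
  refine IntegrableOn.union ?_ ?_
  · have hnear : IntegrableOn (fun t : ℝ ↦ t ^ (-s)) (Ioc 0 1) :=
      (intervalIntegrable_iff_integrableOn_Ioc_of_le zero_le_one).1
        (intervalIntegral.intervalIntegrable_rpow' (by linarith))
    refine hnear.congr_fun (fun t ht ↦ ?_) measurableSet_Ioc
    simp only
    rw [min_eq_left ht.2, ← Real.rpow_one_add' ht.1.le (by linarith)]
    congr 1
    ring
  · have hfar : IntegrableOn (fun t : ℝ ↦ t ^ (-1 - s)) (Ioi 1) :=
      integrableOn_Ioi_rpow_of_lt (by linarith) zero_lt_one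
    refine hfar.congr_fun (fun t (ht : 1 < t) ↦ ?_) measurableSet_Ioi
    simp only
    rw [min_eq_right ht.le, one_mul]

theorem integrable_min_mul_fracKernel [Nontrivial E] {s a b : ℝ} (hs : s ∈ Ioo (0 : ℝ) 1)
    (ha : 0 ≤ a) (hb : 0 ≤ b) :
    Integrable (fun z : E ↦ min (a * ‖z‖) b * fracKernel s z) μ := by
  rcases ha.eq_or_lt with rfl | ha
  · simp [hb]
  rcases hb.eq_or_lt with rfl | hb
  · simp [min_eq_right (mul_nonneg ha.le (norm_nonneg _))]
  simp only [min_mul_norm_mul_fracKernel_eq ha hb]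
  exact ((integrable_min_norm_one_mul_fracKernel hs).comp_smul (div_pos ha hb).ne').const_mul _

theorem integral_min_mul_fracKernel {s a b : ℝ} (hs : s ∈ Ioo (0 : ℝ) 1) (ha : 0 ≤ a)
    (hb : 0 ≤ b) :
    ∫ z : E, min (a * ‖z‖) b * fracKernel s z ∂μ = kernelMass μ s * (a ^ s * b ^ (1 - s)) := by
  rcases ha.eq_or_lt with rfl | ha
  · simp [hb, Real.zero_rpow hs.1.ne']
  rcases hb.eq_or_lt with rfl | hb
  · simp [min_eq_right (mul_nonneg ha.le (norm_nonneg _)), Real.zero_rpow (sub_pos.2 hs.2).ne']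
  have hR : 0 < a / b := div_pos ha hb
  simp only [min_mul_norm_mul_fracKernel_eq ha hb]
  rw [integral_const_mul,
    Measure.integral_comp_smul μ (fun z : E ↦ min ‖z‖ 1 * fracKernel s z), ← kernelMass,
    smul_eq_mul, abs_of_pos (by positivity), Real.rpow_add hR, Real.rpow_natCast,
    Real.rpow_sub hb, Real.div_rpow ha.le hb.le, Real.rpow_one]
  field_simp

variable [Nontrivial E] {F : Type*} [NormedAddCommGroup F]

theorem integrable_of_norm_le_min_mul_fracKernel {s a b : ℝ} (hs : s ∈ Ioo (0 : ℝ) 1)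
    (ha : 0 ≤ a) (hb : 0 ≤ b) {f : E → F} (hf : AEStronglyMeasurable f μ)
    (hle : ∀ᵐ z ∂μ, ‖f z‖ ≤ min (a * ‖z‖) b * fracKernel s z) : Integrable f μ :=
  (integrable_min_mul_fracKernel hs ha hb).mono' hf hle

variable [NormedSpace ℝ F]

theorem norm_integral_le_of_norm_le_min_mul_fracKernel {s a b : ℝ} (hs : s ∈ Ioo (0 : ℝ) 1)
    (ha : 0 ≤ a) (hb : 0 ≤ b) {f : E → F}
    (hle : ∀ᵐ z ∂μ, ‖f z‖ ≤ min (a * ‖z‖) b * fracKernel s z) :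
    ‖∫ z, f z ∂μ‖ ≤ kernelMass μ s * (a ^ s * b ^ (1 - s)) :=
  (norm_integral_le_of_norm_le (integrable_min_mul_fracKernel hs ha hb) hle).trans_eq
    (integral_min_mul_fracKernel hs ha hb)

theorem ae_norm_truncKernel_le {s ρ : ℝ} (hs : 0 ≤ s) (hρ : 0 < ρ) :
    ∀ᵐ z : E ∂μ, ‖truncKernel s ρ z‖ ≤ min (ρ⁻¹ * ‖z‖) 1 * fracKernel s z := by
  filter_upwards [Measure.ae_ne μ 0] with z hz
  rw [Real.norm_of_nonneg (truncKernel_nonneg hρ s z)]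
  exact truncKernel_le_min_mul_fracKernel hs hρ hz

theorem integrable_truncKernel {s ρ : ℝ} (hs : s ∈ Ioo (0 : ℝ) 1) (hρ : 0 < ρ) :
    Integrable (truncKernel s ρ : E → ℝ) μ :=
  integrable_of_norm_le_min_mul_fracKernel hs (by positivity) zero_le_one
    (continuous_truncKernel hρ s).aestronglyMeasurable (ae_norm_truncKernel_le hs.1.le hρ)

theorem integral_truncKernel_le {s ρ : ℝ} (hs : s ∈ Ioo (0 : ℝ) 1) (hρ : 0 < ρ) :
    ∫ z : E, truncKernel s ρ z ∂μ ≤ kernelMass μ s * ρ ^ (-s) := by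
  have h := norm_integral_le_of_norm_le_min_mul_fracKernel hs (by positivity) zero_le_one
    (ae_norm_truncKernel_le (μ := μ) hs.1.le hρ)
  rw [Real.one_rpow, mul_one, Real.inv_rpow hρ.le, ← Real.rpow_neg hρ.le] at h
  exact (Real.le_norm_self _).trans h

theorem integral_abs_truncKernel_sub_le {s ρ : ℝ} (hs : s ∈ Ioo (0 : ℝ) 1) (hρ : 0 < ρ)
    (x y : E) :
    ∫ w, |truncKernel s ρ (w - x) - truncKernel s ρ (w - y)| ∂μ ≤
      2 * (Module.finrank ℝ E + s) * ρ⁻¹ * (kernelMass μ s * ρ ^ (-s)) * ‖x - y‖ := by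
  have hs0 := hs.1
  have hint := integrable_truncKernel (μ := μ) hs hρ
  set c : ℝ := (Module.finrank ℝ E + s) * ρ⁻¹ * ‖x - y‖
  calc ∫ w, |truncKernel s ρ (w - x) - truncKernel s ρ (w - y)| ∂μ
      ≤ ∫ w, c * (truncKernel s ρ (w - x) + truncKernel s ρ (w - y)) ∂μ := by
        refine integral_mono ((hint.comp_sub_right x).sub (hint.comp_sub_right y)).abs
          (((hint.comp_sub_right x).add (hint.comp_sub_right y)).const_mul c) fun w ↦ ?_
        have h := abs_truncKernel_sub_le hs0.le hρ (w - x) (w - y)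
        rwa [sub_sub_sub_cancel_left, norm_sub_rev y x] at h
    _ = c * (2 * ∫ w, truncKernel s ρ w ∂μ) := by
        rw [integral_const_mul, integral_add (hint.comp_sub_right x) (hint.comp_sub_right y),
          integral_sub_right_eq_self (truncKernel s ρ), integral_sub_right_eq_self, two_mul]
    _ ≤ c * (2 * (kernelMass μ s * ρ ^ (-s))) := by
        gcongr
        exact integral_truncKernel_le hs hρ
    _ = _ := by ring

end Kernel

section FractionalDifference

variable {E F : Type*} [NormedAddCommGroup E] [NormedSpace ℝ E] [MeasurableSpace E]
  [NormedAddCommGroup F] [NormedSpace ℝ F]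

/-- The integral `∫ (v(x) - v(x+z)) |z|^{-(d+s)} dz`: the fractional Laplacian `(-Δ)^{s/2} v (x)`
up to its normalising constant, for functions with values in a normed space. -/
def fracDiff (μ : Measure E) (s : ℝ) (v : E → F) (x : E) : F :=
  ∫ z, fracKernel s z • (v x - v (x + z)) ∂μ

theorem fracDiff_sub {μ : Measure E} {s : ℝ} {v : E → F} {x y : E}
    (hx : Integrable (fun z ↦ fracKernel s z • (v x - v (x + z))) μ)
    (hy : Integrable (fun z ↦ fracKernel s z • (v y - v (y + z))) μ) :
    fracDiff μ s v x - fracDiff μ s v y =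
      ∫ z, fracKernel s z • ((v x - v (x + z)) - (v y - v (y + z))) ∂μ := by
  simp only [fracDiff, smul_sub (fracKernel s _) (v x - _)]
  exact (integral_sub hx hy).symm

variable [BorelSpace E] {μ : Measure E}

theorem aestronglyMeasurable_fracKernel_smul_sub [μ.IsAddLeftInvariant] {v : E → F}
    (hv : AEStronglyMeasurable v μ) (s : ℝ) (x : E) :
    AEStronglyMeasurable (fun z ↦ fracKernel s z • (v x - v (x + z))) μ :=
  (measurable_fracKernel s).aestronglyMeasurable.smul
    (aestronglyMeasurable_const.sub
      (hv.comp_measurePreserving (measurePreserving_add_left μ x)))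

variable [FiniteDimensional ℝ E] [Nontrivial E] [μ.IsAddHaarMeasure]

theorem integrable_fracKernel_smul_sub {s a b : ℝ} (hs : s ∈ Ioo (0 : ℝ) 1) (ha : 0 ≤ a)
    (hb : 0 ≤ b) {v : E → F} (hv : AEStronglyMeasurable v μ) {x : E}
    (h : ∀ z, ‖v x - v (x + z)‖ ≤ min (a * ‖z‖) b) :
    Integrable (fun z ↦ fracKernel s z • (v x - v (x + z))) μ :=
  integrable_of_norm_le_min_mul_fracKernel hs ha hb
    (aestronglyMeasurable_fracKernel_smul_sub hv s x)
    (ae_of_all μ fun z ↦ norm_fracKernel_smul_le z (h z))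

theorem norm_fracDiff_le {s a b : ℝ} (hs : s ∈ Ioo (0 : ℝ) 1) (ha : 0 ≤ a) (hb : 0 ≤ b)
    {v : E → F} {x : E} (h : ∀ z, ‖v x - v (x + z)‖ ≤ min (a * ‖z‖) b) :
    ‖fracDiff μ s v x‖ ≤ kernelMass μ s * (a ^ s * b ^ (1 - s)) :=
  norm_integral_le_of_norm_le_min_mul_fracKernel hs ha hb
    (ae_of_all μ fun z ↦ norm_fracKernel_smul_le z (h z))

theorem norm_fracDiff_sub_le {s B : ℝ} {L : ℝ≥0} (hs : s ∈ Ioo (0 : ℝ) 1) {u : E → F}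
    (hu : AEStronglyMeasurable u μ) (hB : ∀ x, ‖u x‖ ≤ B) (hL : LipschitzWith L u) (x y : E) :
    ‖fracDiff μ s u x - fracDiff μ s u y‖ ≤ kernelMass μ s * (2 * L * ‖x - y‖ ^ (1 - s)) := by
  have hB0 : 0 ≤ B := (norm_nonneg _).trans (hB x)
  have hint (x : E) := integrable_fracKernel_smul_sub hs L.coe_nonneg
    (mul_nonneg zero_le_two hB0) hu (norm_sub_comp_add_le_of_lipschitzWith hB hL x)
  rw [fracDiff_sub (hint x) (hint y), ← rpow_mul_mul_rpow_one_sub (by positivity) (by positivity)]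
  exact norm_integral_le_of_norm_le_min_mul_fracKernel hs (by positivity) (by positivity)
    (ae_of_all μ fun z ↦ norm_fracKernel_smul_le z
      (norm_sub_sub_sub_le_of_lipschitzOnWith hL.lipschitzOnWith (mem_univ _) (mem_univ _)
        (mem_univ _) (mem_univ _)))

theorem hasFDerivAt_fracDiff [FiniteDimensional ℝ F] {s B ρ : ℝ} {L A : ℝ≥0}
    (hs : s ∈ Ioo (0 : ℝ) 1) {u : E → F} (hB : ∀ x, ‖u x‖ ≤ B) (hL : LipschitzWith L u)
    (hρ : 0 < ρ) {x : E} (hu : DifferentiableOn ℝ u (ball x (2 * ρ)))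
    (hA : LipschitzOnWith A (fderiv ℝ u) (ball x (2 * ρ))) :
    HasFDerivAt (fracDiff μ s u) (fracDiff μ s (fderiv ℝ u) x) x := by
  have : CompleteSpace F := FiniteDimensional.complete ℝ F
  have hmeas : AEStronglyMeasurable u μ := hL.continuous.aestronglyMeasurable
  have hB0 : 0 ≤ B := (norm_nonneg _).trans (hB x)
  have hux : DifferentiableAt ℝ u x := hu.differentiableAt (ball_mem_nhds x (by positivity))
  have hae : ∀ᵐ z ∂μ, DifferentiableAt ℝ u (x + z) :=
    (measurePreserving_add_left μ x).quasiMeasurePreserving.ae hL.ae_differentiableAt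
  refine (hasFDerivAt_integral_of_dominated_loc_of_lip'
    (bound := fun z ↦ min ((A + 2 * L * ρ⁻¹) * ‖z‖) (2 * L) * fracKernel s z)
    (ball_mem_nhds x hρ) (fun y _ ↦ aestronglyMeasurable_fracKernel_smul_sub hmeas s y)
    (integrable_fracKernel_smul_sub hs L.coe_nonneg (mul_nonneg zero_le_two hB0) hmeas
      (norm_sub_comp_add_le_of_lipschitzWith hB hL x))
    (aestronglyMeasurable_fracKernel_smul_sub
      (measurable_fderiv ℝ u).aestronglyMeasurable s x)
    (ae_of_all μ fun z y hy ↦ ?_)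
    (integrable_min_mul_fracKernel hs (by positivity) (by positivity)) ?_).2
  · rw [← smul_sub, mul_right_comm]
    exact norm_fracKernel_smul_le z (norm_sub_sub_sub_le_of_fderiv hρ hL hu hA hy z)
  · filter_upwards [hae] with z hz
    exact (hux.hasFDerivAt.sub ((hasFDerivAt_comp_add_right z).2 hz.hasFDerivAt)).const_smul _

theorem norm_integral_truncKernel_smul_le {s ρ B : ℝ} (hs : s ∈ Ioo (0 : ℝ) 1) (hρ : 0 < ρ)
    {v : E → F} (hv : AEStronglyMeasurable v μ) (hB : ∀ x, ‖v x‖ ≤ B) (x y : E) :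
    ‖∫ z, truncKernel s ρ z • ((v x - v (x + z)) - (v y - v (y + z))) ∂μ‖ ≤
      kernelMass μ s * ρ ^ (-s) *
        (‖v x - v y‖ + 2 * (Module.finrank ℝ E + s) * B * ρ⁻¹ * ‖x - y‖) := by
  have hk := integrable_truncKernel (μ := μ) hs hρ
  have hB0 : 0 ≤ B := (norm_nonneg _).trans (hB x)
  have hint (x : E) : Integrable (fun z ↦ truncKernel s ρ z • v (x + z)) μ :=
    hk.smul_bdd B (hv.comp_measurePreserving (measurePreserving_add_left μ x))
      (ae_of_all μ fun z ↦ hB (x + z))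
  have hsplit : ∫ z, truncKernel s ρ z • ((v x - v (x + z)) - (v y - v (y + z))) ∂μ =
      (∫ z, truncKernel s ρ z • (v x - v y) ∂μ) -
        ((∫ z, truncKernel s ρ z • v (x + z) ∂μ) - ∫ z, truncKernel s ρ z • v (y + z) ∂μ) := by
    rw [← integral_sub (hint x) (hint y), ← integral_sub (hk.smul_const _)]
    · exact integral_congr_ae (ae_of_all μ fun z ↦ by module)
    · exact (hint x).sub (hint y)
  have hconst : ‖∫ z, truncKernel s ρ z • (v x - v y) ∂μ‖ ≤
      kernelMass μ s * ρ ^ (-s) * ‖v x - v y‖ := by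
    refine (norm_integral_le_integral_norm _).trans ?_
    simp only [norm_smul, Real.norm_of_nonneg (truncKernel_nonneg hρ s _)]
    rw [integral_mul_const]
    exact mul_le_mul_of_nonneg_right (integral_truncKernel_le hs hρ) (norm_nonneg _)
  have htranslate := (norm_integral_smul_comp_add_sub_le hk hv hB x y).trans
    (mul_le_mul_of_nonneg_left (integral_abs_truncKernel_sub_le hs hρ x y) hB0)
  rw [hsplit]
  refine (norm_sub_le _ _).trans ((add_le_add hconst htranslate).trans_eq ?_)
  ring

theorem norm_integral_sub_truncKernel_smul_le {s ρ : ℝ} {A : ℝ≥0} (hs : s ∈ Ioo (0 : ℝ) 1)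
    (hρ : 0 < ρ) {v : E → F} {x y : E} (hA : LipschitzOnWith A v (ball x (2 * ρ)))
    (hxy : ‖x - y‖ ≤ ρ) :
    ‖∫ z, (fracKernel s z - truncKernel s ρ z) •
        ((v x - v (x + z)) - (v y - v (y + z))) ∂μ‖ ≤
      kernelMass μ s * (2 * A * ‖x - y‖ ^ (1 - s)) := by
  rw [← rpow_mul_mul_rpow_one_sub (by positivity) (by positivity)]
  refine norm_integral_le_of_norm_le_min_mul_fracKernel hs (by positivity) (by positivity) ?_
  filter_upwards [Measure.ae_ne μ 0] with z hz0
  rcases le_or_gt ρ ‖z‖ with hz | hz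
  · rw [truncKernel_of_le hz, sub_self, zero_smul, norm_zero]
    exact mul_nonneg (by positivity) (fracKernel_nonneg s z)
  · rw [norm_sub_rev] at hxy
    have hyz : ‖y + z - x‖ < 2 * ρ := by
      rw [add_sub_right_comm]
      linarith [norm_add_le (y - x) z]
    rw [norm_smul, mul_comm]
    refine mul_le_mul (norm_sub_sub_sub_le_of_lipschitzOnWith hA ?_ ?_ ?_ ?_)
      (abs_fracKernel_sub_truncKernel_le hs.1.le hρ hz0) (abs_nonneg _) (by positivity)
    · exact mem_ball_self (by positivity)
    · rw [mem_ball_iff_norm]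
      linarith
    · rw [mem_ball_iff_norm, add_sub_cancel_left]
      linarith
    · rwa [mem_ball_iff_norm]

theorem fracDiff_sub_eq_add_truncKernel {s ρ B : ℝ} (hs : s ∈ Ioo (0 : ℝ) 1) (hρ : 0 < ρ)
    {v : E → F} (hv : AEStronglyMeasurable v μ) (hB : ∀ x, ‖v x‖ ≤ B) {x y : E}
    (hx : Integrable (fun z ↦ fracKernel s z • (v x - v (x + z))) μ)
    (hy : Integrable (fun z ↦ fracKernel s z • (v y - v (y + z))) μ) :
    fracDiff μ s v x - fracDiff μ s v y =
      (∫ z, (fracKernel s z - truncKernel s ρ z) •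
        ((v x - v (x + z)) - (v y - v (y + z))) ∂μ) +
      ∫ z, truncKernel s ρ z • ((v x - v (x + z)) - (v y - v (y + z))) ∂μ := by
  have hfull : Integrable
      (fun z ↦ fracKernel s z • ((v x - v (x + z)) - (v y - v (y + z)))) μ := by
    simpa only [smul_sub (fracKernel s _) (v x - _), Pi.sub_def] using hx.sub hy
  have hfar : Integrable
      (fun z ↦ truncKernel s ρ z • ((v x - v (x + z)) - (v y - v (y + z)))) μ := by
    have hcomp (w : E) : AEStronglyMeasurable (fun z ↦ v w - v (w + z)) μ :=
      aestronglyMeasurable_const.sub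
        (hv.comp_measurePreserving (measurePreserving_add_left μ w))
    refine (integrable_truncKernel hs hρ).smul_bdd (2 * B + 2 * B) ((hcomp x).sub (hcomp y))
      (ae_of_all μ fun z ↦ ?_)
    exact (norm_sub_le _ _).trans
      (add_le_add (norm_sub_le_two_mul hB _ _) (norm_sub_le_two_mul hB _ _))
  rw [fracDiff_sub hx hy]
  simp only [sub_smul (fracKernel s _)]
  rw [integral_sub hfull hfar, sub_add_cancel]

theorem norm_fracDiff_sub_le_of_ball {s ρ B : ℝ} {A : ℝ≥0} (hs : s ∈ Ioo (0 : ℝ) 1) (hρ : 0 < ρ)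
    {v : E → F} (hv : AEStronglyMeasurable v μ) (hB : ∀ x, ‖v x‖ ≤ B) {x y : E}
    (hA : LipschitzOnWith A v (ball x (2 * ρ))) (hxy : ‖x - y‖ < ρ) :
    ‖fracDiff μ s v x - fracDiff μ s v y‖ ≤
      kernelMass μ s * (3 * A + 2 * (Module.finrank ℝ E + s) * B * ρ⁻¹) *
        ‖x - y‖ ^ (1 - s) := by
  have hs0 := hs.1
  have hB0 : 0 ≤ B := (norm_nonneg _).trans (hB x)
  have hK := kernelMass_nonneg μ s
  have hyx : y ∈ ball x ρ := by rwa [mem_ball_iff_norm, norm_sub_rev]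
  have hint {w : E} (hw : w ∈ ball x ρ) :
      Integrable (fun z ↦ fracKernel s z • (v w - v (w + z))) μ :=
    integrable_fracKernel_smul_sub hs (by positivity) (by positivity) hv
      (norm_sub_comp_add_le_of_lipschitzOnWith hρ hB
        (hA.mono (ball_subset_ball' (by rw [mem_ball] at hw; linarith))))
  have hvxy : ‖v x - v y‖ ≤ A * ‖x - y‖ :=
    hA.norm_sub_le (mem_ball_self (by positivity)) (ball_subset_ball (by linarith) hyx)
  have hpow : ρ ^ (-s) * ‖x - y‖ ≤ ‖x - y‖ ^ (1 - s) := by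
    have h := rpow_le_mul_rpow_of_le (norm_nonneg (x - y)) hxy.le (sub_nonneg.2 hs.2.le)
      (sub_le_self 1 hs0.le)
    rw [Real.rpow_one, sub_sub_cancel] at h
    rwa [Real.rpow_neg hρ.le, inv_mul_le_iff₀ (by positivity)]
  set p : ℝ := Module.finrank ℝ E + s
  set K := kernelMass μ s
  calc ‖fracDiff μ s v x - fracDiff μ s v y‖
      ≤ K * (2 * A * ‖x - y‖ ^ (1 - s)) +
          K * ρ ^ (-s) * (‖v x - v y‖ + 2 * p * B * ρ⁻¹ * ‖x - y‖) := by
        rw [fracDiff_sub_eq_add_truncKernel hs hρ hv hB (hint (mem_ball_self hρ)) (hint hyx)]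
        exact norm_add_le_of_le (norm_integral_sub_truncKernel_smul_le hs hρ hA hxy.le)
          (norm_integral_truncKernel_smul_le hs hρ hv hB x y)
    _ ≤ K * (2 * A * ‖x - y‖ ^ (1 - s)) +
          K * ρ ^ (-s) * (A * ‖x - y‖ + 2 * p * B * ρ⁻¹ * ‖x - y‖) := by gcongr
    _ = K * (2 * A * ‖x - y‖ ^ (1 - s)) +
          K * (A + 2 * p * B * ρ⁻¹) * (ρ ^ (-s) * ‖x - y‖) := by ring
    _ ≤ K * (2 * A * ‖x - y‖ ^ (1 - s)) +
          K * (A + 2 * p * B * ρ⁻¹) * ‖x - y‖ ^ (1 - s) := by gcongr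
    _ = K * (3 * A + 2 * p * B * ρ⁻¹) * ‖x - y‖ ^ (1 - s) := by ring

end FractionalDifference

section WeightedHolder

variable {E F : Type*} [NormedAddCommGroup E] [NormedSpace ℝ E] [NormedAddCommGroup F]
  [NormedSpace ℝ F]

/-- The estimate `‖f‖_{C^β(D)} ≤ C` for `β ∈ (0, 2]`, imposed on each of the suprema whose sum is
the norm. Derivatives are taken in the whole space, so that `D` need not be open. -/
structure HolderNormLE (β C : ℝ) (f : E → F) (D : Set E) : Prop where
  norm_le : ∀ x ∈ D, ‖f x‖ ≤ C
  norm_sub_le : β ≤ 1 → ∀ x y, x ∈ D → y ∈ D → ‖f x - f y‖ ≤ C * ‖x - y‖ ^ β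
  differentiableAt : 1 < β → ∀ x ∈ D, DifferentiableAt ℝ f x
  norm_fderiv_le : 1 < β → ∀ x ∈ D, ‖fderiv ℝ f x‖ ≤ C
  norm_fderiv_sub_le : 1 < β → ∀ x y, x ∈ D → y ∈ D →
    ‖fderiv ℝ f x - fderiv ℝ f y‖ ≤ C * ‖x - y‖ ^ (β - 1)

/-- A bound on `f` in `C^{1-s}` everywhere and, off `Z`, in `C^{2-s}` with weights given by the
powers of the distance to `Z` that scaling dictates. -/
structure WeightedHolderBound (s C : ℝ) (f : E → F) (Z : Set E) : Prop where
  norm_le : ∀ x, ‖f x‖ ≤ C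
  norm_sub_le : ∀ x y, ‖f x - f y‖ ≤ C * ‖x - y‖ ^ (1 - s)
  differentiableAt : ∀ x, 0 < infDist x Z → DifferentiableAt ℝ f x
  norm_fderiv_le : ∀ x, 0 < infDist x Z → ‖fderiv ℝ f x‖ ≤ C * infDist x Z ^ (-s)
  norm_fderiv_sub_le : ∀ x y, ‖x - y‖ < infDist x Z / 4 →
    ‖fderiv ℝ f x - fderiv ℝ f y‖ ≤ C * (infDist x Z)⁻¹ * ‖x - y‖ ^ (1 - s)

namespace WeightedHolderBound

variable {s C : ℝ} {f : E → F} {Z : Set E}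

theorem nonneg (h : WeightedHolderBound s C f Z) : 0 ≤ C :=
  (norm_nonneg _).trans (h.norm_le 0)

theorem mono {C' : ℝ} (h : WeightedHolderBound s C f Z) (hC : C ≤ C') :
    WeightedHolderBound s C' f Z where
  norm_le x := (h.norm_le x).trans hC
  norm_sub_le x y := (h.norm_sub_le x y).trans (by gcongr)
  differentiableAt := h.differentiableAt
  norm_fderiv_le x hx := (h.norm_fderiv_le x hx).trans (by gcongr)
  norm_fderiv_sub_le x y hxy := (h.norm_fderiv_sub_le x y hxy).trans (by
    have := infDist_nonneg (x := x) (s := Z)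
    gcongr)

theorem const_smul (h : WeightedHolderBound s C f Z) (c : ℝ) :
    WeightedHolderBound s (|c| * C) (c • f) Z where
  norm_le x := by
    rw [Pi.smul_apply, norm_smul, Real.norm_eq_abs]
    exact mul_le_mul_of_nonneg_left (h.norm_le x) (abs_nonneg c)
  norm_sub_le x y := by
    rw [Pi.smul_apply, Pi.smul_apply, ← smul_sub, norm_smul, Real.norm_eq_abs, mul_assoc]
    exact mul_le_mul_of_nonneg_left (h.norm_sub_le x y) (abs_nonneg c)
  differentiableAt x hx := (h.differentiableAt x hx).const_smul c
  norm_fderiv_le x hx := by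
    rw [fderiv_const_smul_field, Pi.smul_apply, norm_smul, Real.norm_eq_abs, mul_assoc]
    exact mul_le_mul_of_nonneg_left (h.norm_fderiv_le x hx) (abs_nonneg c)
  norm_fderiv_sub_le x y hxy := by
    rw [fderiv_const_smul_field, Pi.smul_apply, Pi.smul_apply, ← smul_sub, norm_smul,
      Real.norm_eq_abs, mul_assoc, mul_assoc, ← mul_assoc C]
    exact mul_le_mul_of_nonneg_left (h.norm_fderiv_sub_le x y hxy) (abs_nonneg c)

theorem norm_sub_le_of_mem_ball (h : WeightedHolderBound s C f Z) (hs : s ∈ Icc (0 : ℝ) 1)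
    {ϱ : ℝ} (hϱ : 0 < ϱ) {x y : E} (hx : ϱ ≤ infDist x Z) (hy : y ∈ ball x (ϱ / 2)) :
    ‖f x - f y‖ ≤ 2 * C * ϱ ^ (-s) * ‖x - y‖ := by
  have hC := h.nonneg
  have hd {w : E} (hw : w ∈ ball x (ϱ / 2)) : ϱ / 2 ≤ infDist w Z :=
    half_le_infDist_of_mem_ball hx hw
  refine (convex_ball x (ϱ / 2)).norm_image_sub_le_of_norm_fderiv_le (𝕜 := ℝ)
    (fun w hw ↦ h.differentiableAt w ((half_pos hϱ).trans_le (hd hw))) (fun w hw ↦ ?_) hy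
    (mem_ball_self (half_pos hϱ))
  have htwo : (2 : ℝ) ^ s ≤ 2 := Real.rpow_le_self_of_one_le one_le_two hs.2
  calc ‖fderiv ℝ f w‖ ≤ C * infDist w Z ^ (-s) :=
        h.norm_fderiv_le w ((half_pos hϱ).trans_le (hd hw))
    _ ≤ C * (ϱ / 2) ^ (-s) :=
      mul_le_mul_of_nonneg_left (Real.rpow_le_rpow_of_nonpos (half_pos hϱ) (hd hw)
        (neg_nonpos.2 hs.1)) hC
    _ = 2 ^ s * (C * ϱ ^ (-s)) := by
      rw [div_eq_mul_inv, Real.mul_rpow hϱ.le (by norm_num), Real.inv_rpow two_pos.le,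
        ← Real.rpow_neg two_pos.le, neg_neg]
      ring
    _ ≤ 2 * C * ϱ ^ (-s) := by
      rw [mul_assoc]
      gcongr

theorem norm_sub_le_mul_rpow (h : WeightedHolderBound s C f Z) (hs : s ∈ Icc (0 : ℝ) 1) {β ϱ : ℝ}
    (hβ : β ∈ Icc (1 - s) 1) (hϱ : 0 < ϱ) {x y : E} (hx : ϱ ≤ infDist x Z) :
    ‖f x - f y‖ ≤ 4 * C * ϱ ^ (1 - s - β) * ‖x - y‖ ^ β := by
  have hC := h.nonneg
  have hβ0 : 0 ≤ β := (sub_nonneg.2 hs.2).trans hβ.1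
  rcases lt_or_ge ‖x - y‖ (ϱ / 4) with hxy | hxy
  · have hpow := rpow_le_mul_rpow_of_le (norm_nonneg (x - y)) (by linarith : ‖x - y‖ ≤ ϱ) hβ0
      hβ.2
    rw [Real.rpow_one] at hpow
    calc ‖f x - f y‖ ≤ 2 * C * ϱ ^ (-s) * ‖x - y‖ :=
          h.norm_sub_le_of_mem_ball hs hϱ hx (by rw [mem_ball_iff_norm, norm_sub_rev]; linarith)
      _ ≤ 2 * C * ϱ ^ (-s) * (ϱ ^ (1 - β) * ‖x - y‖ ^ β) := by gcongr
      _ = 2 * C * ϱ ^ (1 - s - β) * ‖x - y‖ ^ β := by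
        rw [show 1 - s - β = -s + (1 - β) by ring, Real.rpow_add hϱ]
        ring
      _ ≤ 4 * C * ϱ ^ (1 - s - β) * ‖x - y‖ ^ β := by
        gcongr
        norm_num
  · calc ‖f x - f y‖ ≤ C * ‖x - y‖ ^ (1 - s) := h.norm_sub_le x y
      _ ≤ C * (4 * ϱ ^ (1 - s - β) * ‖x - y‖ ^ β) := by
        gcongr
        exact rpow_le_four_mul_rpow_of_le hϱ hxy hβ.1 (by linarith [hβ.2, hs.2])
      _ = 4 * C * ϱ ^ (1 - s - β) * ‖x - y‖ ^ β := by ring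

theorem norm_fderiv_le_rpow (h : WeightedHolderBound s C f Z) (hs : 0 ≤ s) {ϱ : ℝ} (hϱ : 0 < ϱ)
    {x : E} (hx : ϱ ≤ infDist x Z) : ‖fderiv ℝ f x‖ ≤ C * ϱ ^ (-s) :=
  (h.norm_fderiv_le x (hϱ.trans_le hx)).trans (mul_le_mul_of_nonneg_left
    (Real.rpow_le_rpow_of_nonpos hϱ hx (neg_nonpos.2 hs)) h.nonneg)

theorem norm_fderiv_sub_le_mul_rpow (h : WeightedHolderBound s C f Z) (hs : 0 ≤ s) {β ϱ : ℝ}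
    (hβ : β ∈ Icc 1 (2 - s)) (hϱ : 0 < ϱ) {x y : E} (hx : ϱ ≤ infDist x Z)
    (hy : ϱ ≤ infDist y Z) :
    ‖fderiv ℝ f x - fderiv ℝ f y‖ ≤ 8 * C * ϱ ^ (1 - s - β) * ‖x - y‖ ^ (β - 1) := by
  have hC := h.nonneg
  rcases lt_or_ge ‖x - y‖ (ϱ / 4) with hxy | hxy
  · have hinv : (infDist x Z)⁻¹ ≤ ϱ⁻¹ := inv_anti₀ hϱ hx
    calc ‖fderiv ℝ f x - fderiv ℝ f y‖ ≤ C * (infDist x Z)⁻¹ * ‖x - y‖ ^ (1 - s) :=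
          h.norm_fderiv_sub_le x y (by linarith)
      _ ≤ C * ϱ⁻¹ * (ϱ ^ ((1 - s) - (β - 1)) * ‖x - y‖ ^ (β - 1)) := by
        gcongr
        exact rpow_le_mul_rpow_of_le (norm_nonneg _) (by linarith) (by linarith [hβ.1])
          (by linarith [hβ.2])
      _ = C * ϱ ^ (1 - s - β) * ‖x - y‖ ^ (β - 1) := by
        rw [show 1 - s - β = -1 + ((1 - s) - (β - 1)) by ring, Real.rpow_add hϱ,
          Real.rpow_neg_one]
        ring
      _ ≤ 8 * C * ϱ ^ (1 - s - β) * ‖x - y‖ ^ (β - 1) := by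
        gcongr
        linarith
  · have hpow := rpow_le_four_mul_rpow_of_le hϱ hxy (sub_nonneg.2 hβ.1)
      (by linarith [hβ.2] : β - 1 ≤ 0 + 1)
    rw [Real.rpow_zero] at hpow
    calc ‖fderiv ℝ f x - fderiv ℝ f y‖ ≤ C * ϱ ^ (-s) + C * ϱ ^ (-s) :=
          norm_sub_le_of_le (h.norm_fderiv_le_rpow hs hϱ hx) (h.norm_fderiv_le_rpow hs hϱ hy)
      _ = 2 * C * ϱ ^ (-s) * 1 := by ring
      _ ≤ 2 * C * ϱ ^ (-s) * (4 * ϱ ^ (0 - (β - 1)) * ‖x - y‖ ^ (β - 1)) := by gcongr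
      _ = 8 * C * ϱ ^ (1 - s - β) * ‖x - y‖ ^ (β - 1) := by
        rw [show 1 - s - β = -s + (0 - (β - 1)) by ring, Real.rpow_add hϱ]
        ring

theorem holderNormLE (h : WeightedHolderBound s C f Z) (hs : s ∈ Icc (0 : ℝ) 1) {β ϱ : ℝ}
    (hβ : β ∈ Icc (1 - s) (2 - s)) (hϱ : ϱ ∈ Ioo (0 : ℝ) 1) :
    HolderNormLE β (8 * C * ϱ ^ (1 - s - β)) f {x | ϱ ≤ infDist x Z} := by
  have hC := h.nonneg
  have hϱ0 := hϱ.1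
  have hone : 1 ≤ ϱ ^ (1 - s - β) :=
    Real.one_le_rpow_of_pos_of_le_one_of_nonpos hϱ.1 hϱ.2.le (by linarith [hβ.1])
  refine ⟨fun x _ ↦ (h.norm_le x).trans ?_, fun hβ1 x y hx _ ↦ ?_,
    fun _ x hx ↦ h.differentiableAt x (hϱ.1.trans_le hx),
    fun hβ1 x hx ↦ (h.norm_fderiv_le_rpow hs.1 hϱ.1 hx).trans ?_,
    fun hβ1 x y hx hy ↦ h.norm_fderiv_sub_le_mul_rpow hs.1 ⟨hβ1.le, hβ.2⟩ hϱ.1 hx hy⟩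
  · nlinarith
  · refine (h.norm_sub_le_mul_rpow hs ⟨hβ.1, hβ1⟩ hϱ.1 hx).trans ?_
    gcongr
    norm_num
  · have hpow : ϱ ^ (-s) ≤ ϱ ^ (1 - s - β) :=
      Real.rpow_le_rpow_of_exponent_ge hϱ.1 hϱ.2.le (by linarith)
    gcongr
    linarith

end WeightedHolderBound

end WeightedHolder

section HessianDecay

variable {E F : Type*} [NormedAddCommGroup E] [NormedSpace ℝ E] [NormedAddCommGroup F]
  [NormedSpace ℝ F]

/-- Off `Z`, the function `u` is twice differentiable with `|D²u| ≤ C₀ dist(·, Z)⁻¹`. -/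
def HessianDecayOff (Z : Set E) (C₀ : ℝ) (u : E → F) : Prop :=
  ∀ x, 0 < infDist x Z → DifferentiableAt ℝ u x ∧ DifferentiableAt ℝ (fderiv ℝ u) x ∧
    ‖fderiv ℝ (fderiv ℝ u) x‖ ≤ C₀ * (infDist x Z)⁻¹

namespace HessianDecayOff

variable {Z : Set E} {C₀ : ℝ} {u : E → F} {x : E} {ρ : ℝ}

theorem of_contDiffOn {Ω : Set E} (hΩ : IsOpen Ω) (hC₀ : 0 ≤ C₀) (hu : ContDiffOn ℝ 2 u Ω)
    (hess_le : ∀ x ∈ Ω, ‖fderiv ℝ (fderiv ℝ u) x‖ ≤ C₀ * (infDist x (frontier Ω))⁻¹)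
    (hu0 : ∀ x ∉ Ω, u x = 0) : HessianDecayOff (frontier Ω) C₀ u := by
  intro x hx
  by_cases hxΩ : x ∈ Ω
  · have hux : ContDiffAt ℝ 2 u x := hu.contDiffAt (hΩ.mem_nhds hxΩ)
    exact ⟨hux.differentiableAt (by norm_num),
      (hux.fderiv_right (m := 1) (by norm_num)).differentiableAt (by norm_num), hess_le x hxΩ⟩
  · have hxcl : x ∉ closure Ω := fun hcl ↦
      hx.ne' (infDist_zero_of_mem ⟨hcl, by rwa [hΩ.interior_eq]⟩)
    have hu_zero : u =ᶠ[nhds x] 0 := by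
      filter_upwards [isClosed_closure.isOpen_compl.mem_nhds hxcl] with y hy
      exact hu0 y fun hyΩ ↦ hy (subset_closure hyΩ)
    have hDu_zero : fderiv ℝ u =ᶠ[nhds x] 0 := by simpa using hu_zero.fderiv (𝕜 := ℝ)
    refine ⟨hu_zero.differentiableAt_iff.2 (differentiableAt_const 0),
      hDu_zero.differentiableAt_iff.2 (differentiableAt_const 0), ?_⟩
    rw [hDu_zero.fderiv_eq, fderiv_zero, Pi.zero_apply]
    exact ContinuousLinearMap.opNorm_zero.trans_le (by positivity)

theorem differentiableOn_ball (h : HessianDecayOff Z C₀ u) (hρ : 0 < ρ)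
    (hx : 2 * ρ ≤ infDist x Z) : DifferentiableOn ℝ u (ball x ρ) := fun y hy ↦
  (h y (by linarith [half_le_infDist_of_mem_ball hx (y := y) (by simpa using hy)])
    ).1.differentiableWithinAt

theorem lipschitzOnWith_fderiv (h : HessianDecayOff Z C₀ u) (hC₀ : 0 ≤ C₀) (hρ : 0 < ρ)
    (hx : 2 * ρ ≤ infDist x Z) {A : ℝ≥0} (hA : C₀ / ρ ≤ A) :
    LipschitzOnWith A (fderiv ℝ u) (ball x ρ) := by
  have hd {y : E} (hy : y ∈ ball x ρ) : ρ ≤ infDist y Z := by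
    simpa using half_le_infDist_of_mem_ball hx (y := y) (by simpa using hy)
  refine (convex_ball x ρ).lipschitzOnWith_of_nnnorm_fderiv_le (𝕜 := ℝ)
    (fun y hy ↦ (h y (hρ.trans_le (hd hy))).2.1) fun y hy ↦ ?_
  rw [← NNReal.coe_le_coe, coe_nnnorm]
  refine (h y (hρ.trans_le (hd hy))).2.2.trans (le_trans ?_ hA)
  rw [div_eq_mul_inv]
  exact mul_le_mul_of_nonneg_left (inv_anti₀ hρ (hd hy)) hC₀

end HessianDecayOff

end HessianDecay

section WeightedFracDiff

variable {E F : Type*} [NormedAddCommGroup E] [NormedSpace ℝ E] [FiniteDimensional ℝ E]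
  [Nontrivial E] [MeasurableSpace E] [BorelSpace E] {μ : Measure E} [μ.IsAddHaarMeasure]
  [NormedAddCommGroup F] [NormedSpace ℝ F] {s C₀ B : ℝ} {L : ℝ≥0} {Z : Set E} {u : E → F}

theorem HessianDecayOff.hasFDerivAt_fracDiff [FiniteDimensional ℝ F]
    (h : HessianDecayOff Z C₀ u) (hC₀ : 0 ≤ C₀) (hs : s ∈ Ioo (0 : ℝ) 1) (hB : ∀ x, ‖u x‖ ≤ B)
    (hL : LipschitzWith L u) {x : E} (hx : 0 < infDist x Z) :
    HasFDerivAt (fracDiff μ s u) (fracDiff μ s (fderiv ℝ u) x) x := by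
  have hd : 2 * (2 * (infDist x Z / 4)) ≤ infDist x Z := by linarith
  exact _root_.hasFDerivAt_fracDiff hs hB hL (by positivity : 0 < infDist x Z / 4)
    (h.differentiableOn_ball (by positivity) hd)
    (h.lipschitzOnWith_fderiv hC₀ (by positivity) hd (Real.le_coe_toNNReal _))

theorem HessianDecayOff.norm_fracDiff_fderiv_le (h : HessianDecayOff Z C₀ u) (hC₀ : 0 ≤ C₀)
    (hs : s ∈ Ioo (0 : ℝ) 1) (hL : LipschitzWith L u) {x : E} (hx : 0 < infDist x Z) :
    ‖fracDiff μ s (fderiv ℝ u) x‖ ≤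
      kernelMass μ s * ((2 * C₀ + 8 * L) ^ s * (2 * L) ^ (1 - s)) * infDist x Z ^ (-s) := by
  set d := infDist x Z
  obtain ⟨A, hA⟩ : ∃ A : ℝ≥0, (A : ℝ) = C₀ / (d / 2) := ⟨⟨_, by positivity⟩, rfl⟩
  have hDu (w : E) : ‖fderiv ℝ u w‖ ≤ L := norm_fderiv_le_of_lipschitz ℝ hL
  refine (norm_fracDiff_le hs (by positivity) (by positivity)
    (norm_sub_comp_add_le_of_lipschitzOnWith (half_pos hx) hDu
      (h.lipschitzOnWith_fderiv hC₀ (half_pos hx) (by linarith) hA.ge))).trans ?_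
  have hsum : A + 2 * L * (d / 2)⁻¹ ≤ (2 * C₀ + 8 * L) * d⁻¹ := by
    have : 0 ≤ 4 * L * d⁻¹ := by positivity
    rw [hA, inv_div, div_div_eq_mul_div, div_eq_mul_inv, div_eq_mul_inv]
    linarith
  calc kernelMass μ s * ((A + 2 * L * (d / 2)⁻¹) ^ s * (2 * L) ^ (1 - s))
      ≤ kernelMass μ s * (((2 * C₀ + 8 * L) * d⁻¹) ^ s * (2 * L) ^ (1 - s)) := by
        have := kernelMass_nonneg μ s
        have := hs.1
        gcongr
    _ = _ := by
        rw [Real.mul_rpow (by positivity) (by positivity), Real.inv_rpow hx.le,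
          ← Real.rpow_neg hx.le]
        ring

theorem HessianDecayOff.norm_fracDiff_fderiv_sub_le [FiniteDimensional ℝ F]
    (h : HessianDecayOff Z C₀ u) (hC₀ : 0 ≤ C₀) (hs : s ∈ Ioo (0 : ℝ) 1) (hL : LipschitzWith L u)
    {x y : E} (hxy : ‖x - y‖ < infDist x Z / 4) :
    ‖fracDiff μ s (fderiv ℝ u) x - fracDiff μ s (fderiv ℝ u) y‖ ≤
      kernelMass μ s * (6 * C₀ + 8 * (Module.finrank ℝ E + s) * L) * (infDist x Z)⁻¹ *
        ‖x - y‖ ^ (1 - s) := by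
  set d := infDist x Z
  have hd : 0 < d := by linarith [norm_nonneg (x - y)]
  obtain ⟨A, hA⟩ : ∃ A : ℝ≥0, (A : ℝ) = C₀ / (2 * (d / 4)) := ⟨⟨_, by positivity⟩, rfl⟩
  have hDu (w : E) : ‖fderiv ℝ u w‖ ≤ L := norm_fderiv_le_of_lipschitz ℝ hL
  have : CompleteSpace F := FiniteDimensional.complete ℝ F
  have hmeas : AEStronglyMeasurable (fderiv ℝ u) μ :=
    (measurable_fderiv ℝ u).aestronglyMeasurable
  refine (norm_fracDiff_sub_le_of_ball hs (by positivity) hmeas hDu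
    (h.lipschitzOnWith_fderiv hC₀ (by positivity) (by linarith) hA.ge) hxy).trans_eq ?_
  rw [hA]
  field_simp
  ring

theorem exists_weightedHolderBound_fracDiff [FiniteDimensional ℝ F] (μ : Measure E)
    [μ.IsAddHaarMeasure] (hs : s ∈ Ioo (0 : ℝ) 1) (hC₀ : 0 ≤ C₀) (M : ℝ) (L : ℝ≥0) :
    ∃ C, ∀ (Z : Set E) (u : E → F), (∀ x, ‖u x‖ ≤ M) → LipschitzWith L u →
      HessianDecayOff Z C₀ u → WeightedHolderBound s C (fracDiff μ s u) Z := by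
  set K := kernelMass μ s
  obtain ⟨C, h₁, h₂, h₃, h₄⟩ : ∃ C : ℝ, K * (L ^ s * (2 * |M|) ^ (1 - s)) ≤ C ∧ K * (2 * L) ≤ C ∧
      K * ((2 * C₀ + 8 * L) ^ s * (2 * L) ^ (1 - s)) ≤ C ∧
      K * (6 * C₀ + 8 * (Module.finrank ℝ E + s) * L) ≤ C :=
    ⟨max (max _ _) (max _ _), le_max_of_le_left (le_max_left _ _),
      le_max_of_le_left (le_max_right _ _), le_max_of_le_right (le_max_left _ _),
      le_max_of_le_right (le_max_right _ _)⟩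
  refine ⟨C, fun Z u hM hL hu ↦ ?_⟩
  have hB (x : E) : ‖u x‖ ≤ |M| := (hM x).trans (le_abs_self M)
  have hderiv {x : E} (hx : 0 < infDist x Z) := hu.hasFDerivAt_fracDiff (μ := μ) hC₀ hs hM hL hx
  refine ⟨fun x ↦ ?_, fun x y ↦ ?_, fun x hx ↦ (hderiv hx).differentiableAt, fun x hx ↦ ?_,
    fun x y hxy ↦ ?_⟩
  · exact (norm_fracDiff_le hs L.coe_nonneg (by positivity)
      (norm_sub_comp_add_le_of_lipschitzWith hB hL x)).trans h₁
  · refine (norm_fracDiff_sub_le hs hL.continuous.aestronglyMeasurable hM hL x y).trans ?_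
    rw [← mul_assoc]
    gcongr
  · rw [(hderiv hx).fderiv]
    refine (hu.norm_fracDiff_fderiv_le hC₀ hs hL hx).trans ?_
    gcongr
  · have hx : 0 < infDist x Z := by linarith [norm_nonneg (x - y)]
    have hy : y ∈ ball x (infDist x Z / 2) := by
      rw [mem_ball_iff_norm, norm_sub_rev]
      linarith
    rw [(hderiv hx).fderiv,
      (hderiv ((half_pos hx).trans_le (half_le_infDist_of_mem_ball le_rfl hy))).fderiv]
    refine (hu.norm_fracDiff_fderiv_sub_le hC₀ hs hL hxy).trans ?_
    gcongr

end WeightedFracDiff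

theorem fracHalf_holder_interior_general {E F : Type*} [NormedAddCommGroup E] [NormedSpace ℝ E]
    [FiniteDimensional ℝ E] [Nontrivial E] [MeasurableSpace E] [BorelSpace E] (μ : Measure E)
    [μ.IsAddHaarMeasure] [NormedAddCommGroup F] [NormedSpace ℝ F] [FiniteDimensional ℝ F]
    {s C₀ : ℝ} (hs : s ∈ Ioo (0 : ℝ) 1) (hC₀ : 0 ≤ C₀) (c M : ℝ) (L : ℝ≥0) :
    ∃ C > (0 : ℝ), ∀ (Z : Set E) (u : E → F), (∀ x, ‖u x‖ ≤ M) → LipschitzWith L u →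
      HessianDecayOff Z C₀ u → ∀ β ∈ Icc (1 - s) (2 - s), ∀ ϱ ∈ Ioo (0 : ℝ) 1,
        HolderNormLE β (C * ϱ ^ (1 - s - β)) (c • fracDiff μ s u) {x | ϱ ≤ infDist x Z} := by
  obtain ⟨C, hC⟩ := exists_weightedHolderBound_fracDiff (F := F) μ hs hC₀ M L
  refine ⟨8 * max (|c| * C) 1, by positivity, fun Z u hM hL hu β hβ ϱ hϱ ↦ ?_⟩
  exact (((hC Z u hM hL hu).const_smul c).mono (le_max_left _ _)).holderNormLE
    (Ioo_subset_Icc_self hs) hβ hϱ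

theorem norm_gradient {H : Type*} [NormedAddCommGroup H] [InnerProductSpace ℝ H]
    [CompleteSpace H] (f : H → ℝ) (x : H) : ‖gradient f x‖ = ‖fderiv ℝ f x‖ :=
  LinearIsometryEquiv.norm_map _ _

theorem norm_gradient_sub_gradient {H : Type*} [NormedAddCommGroup H] [InnerProductSpace ℝ H]
    [CompleteSpace H] (f : H → ℝ) (x y : H) :
    ‖gradient f x - gradient f y‖ = ‖fderiv ℝ f x - fderiv ℝ f y‖ := by
  rw [gradient, gradient, ← map_sub, LinearIsometryEquiv.norm_map]

theorem fracHalf_eq_smul_fracDiff (n : ℕ) (s : ℝ) (u : En n → ℝ) :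
    fracHalf n s u = cK n (s / 2) • fracDiff volume s u := by
  ext x
  rw [fracHalf, Pi.smul_apply, smul_eq_mul, fracDiff]
  congr 2 with z
  rw [fracKernel, finrank_euclideanSpace_fin, Real.rpow_neg (norm_nonneg z), smul_eq_mul,
    div_eq_inv_mul]

/-- Lemma 2.3(ii): `‖𝔤‖_{C^β(Ω̆_ϱ)} ≤ C ϱ^{1-s-β}` for
`β ∈ [1-s, 2-s]`, `ϱ ∈ (0,1)`, where `Ω̆_ϱ = {dist(·,∂Ω) ≥ ϱ}`. The `C^β` norm is the
Hölder norm for `β ≤ 1`, and for `β > 1` it also comprises `sup|∇𝔤|` and the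
`(β-1)`-Hölder seminorm of `∇𝔤`. -/
theorem fracHalf_holder_interior (n : ℕ) (hn : 1 ≤ n) (s C₀ M : ℝ) (L : ℝ≥0)
    (hs : s ∈ Set.Ioo (0:ℝ) 1) (hC₀ : 0 < C₀) :
    ∃ C > (0:ℝ), ∀ (Ω : Set (En n)) (u : En n → ℝ),
      IsOpen Ω → IsBounded Ω →
      (∀ x, |u x| ≤ M) → LipschitzWith L u → ContDiffOn ℝ 2 u Ω →
      (∀ x ∈ Ω, ‖hess n u x‖ ≤ C₀ * (infDist x (frontier Ω))⁻¹) →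
      (∀ x, |u x| ≤ C₀ * infDist x Ωᶜ) →
      ∀ β ∈ Set.Icc (1 - s) (2 - s), ∀ ϱ ∈ Set.Ioo (0:ℝ) 1,
        (β ≤ 1 →
          (∀ x : En n, ϱ ≤ infDist x (frontier Ω) →
            |fracHalf n s u x| ≤ C * ϱ ^ (1 - s - β)) ∧
          (∀ x y : En n, ϱ ≤ infDist x (frontier Ω) → ϱ ≤ infDist y (frontier Ω) →
            |fracHalf n s u x - fracHalf n s u y| ≤ C * ϱ ^ (1 - s - β) * ‖x - y‖ ^ β)) ∧
        (1 < β →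
          (∀ x : En n, ϱ ≤ infDist x (frontier Ω) →
            |fracHalf n s u x| ≤ C * ϱ ^ (1 - s - β)) ∧
          (∀ x : En n, ϱ ≤ infDist x (frontier Ω) →
            ‖gradient (fracHalf n s u) x‖ ≤ C * ϱ ^ (1 - s - β)) ∧
          (∀ x y : En n, ϱ ≤ infDist x (frontier Ω) → ϱ ≤ infDist y (frontier Ω) →
            ‖gradient (fracHalf n s u) x - gradient (fracHalf n s u) y‖
              ≤ C * ϱ ^ (1 - s - β) * ‖x - y‖ ^ (β - 1))) := by
  have : Nonempty (Fin n) := ⟨⟨0, hn⟩⟩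
  obtain ⟨C, hC, h⟩ := fracHalf_holder_interior_general (F := ℝ) (volume : Measure (En n)) hs
    hC₀.le (cK n (s / 2)) M L
  refine ⟨C, hC, fun Ω u hΩ _ hM hL hu hess_le hdist β hβ ϱ hϱ ↦ ?_⟩
  have hu0 : ∀ x ∉ Ω, u x = 0 := fun x hx ↦
    abs_nonpos_iff.1 (by simpa [infDist_zero_of_mem (mem_compl hx)] using hdist x)
  have hf := h (frontier Ω) u hM hL (.of_contDiffOn hΩ hC₀.le hu hess_le hu0) β hβ ϱ hϱ
  simp only [fracHalf_eq_smul_fracDiff, norm_gradient, norm_gradient_sub_gradient,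
    ← Real.norm_eq_abs]
  exact ⟨fun hβ1 ↦ ⟨hf.norm_le, hf.norm_sub_le hβ1⟩,
    fun hβ1 ↦ ⟨hf.norm_le, hf.norm_fderiv_le hβ1, hf.norm_fderiv_sub_le hβ1⟩⟩
end
end
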